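/- arXiv:2308.14919 — 4 statements merged into one kernel-verified Lean document; each statement's English description precedes it below -/
import Mathlib

section
/- Loop Bellman equation: Let (X_t, R_t)_{t≥0} be a finite Markov reward process, γ ∈ [0,1) a discount factor, and s a positive recurrent state (ρ_s < ∞) with X_0 = s. Then the discounted value satisfies v(s) = β(s) + α(s)·v(s), where α(s) = E_s[γ^{I_1(s)}] is the expected loop discount and β(s) = E_s[G_1(s)] is the expected loop discounted reward; equivalently, since α(s) ≤ γ < 1, v(s) = β(s)/(1 − α(s)). -/
open MeasureTheory ProbabilityTheory Filter
open scoped ENNReal ENat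

noncomputable section

/-- The first return time to `s` of the process `X` (`⊤` if `s` is never revisited). -/
def retTime {S Ω : Type*} (X : ℕ → Ω → S) (s : S) (ω : Ω) : ℕ∞ :=
  ⨅ (m : ℕ) (_ : 0 < m ∧ X m ω = s), (m : ℕ∞)

/-- `waitTime X s n ω`: the step of the `n`-th visit of the process `X` to `s`,
i.e. `inf {w : n ≤ ∑_{t=0}^w 1[X_t = s]}` (`⊤` if there is no `n`-th visit). -/
def waitTime {S Ω : Type*} [DecidableEq S] (X : ℕ → Ω → S) (s : S) (n : ℕ) (ω : Ω) : ℕ∞ :=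
  ⨅ (w : ℕ) (_ : n ≤ ∑ t ∈ Finset.range (w + 1), if X t ω = s then 1 else 0), (w : ℕ∞)

/-- The `n`-th interarrival time `I_n(s) = W_{n+1}(s) - W_n(s)`. -/
def interTime {S Ω : Type*} [DecidableEq S] (X : ℕ → Ω → S) (s : S) (n : ℕ) (ω : Ω) : ℕ∞ :=
  waitTime X s (n + 1) ω - waitTime X s n ω

/-- `γ` raised to a possibly-infinite power (`γ^⊤ = 0`, as appropriate for `γ < 1`). -/
def discPow (γ : ℝ) (n : ℕ∞) : ℝ :=
  if n = ⊤ then 0 else γ ^ n.toNat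

/-- The `n`-th loop `γ`-discounted rewards `G_n(s) = ∑_{u=0}^{I_n(s)-1} γ^u R_{W_n(s)+u}`. -/
def loopReward {S Ω : Type*} [DecidableEq S] (γ : ℝ) (X : ℕ → Ω → S) (R : ℕ → Ω → ℝ)
    (s : S) (n : ℕ) (ω : Ω) : ℝ :=
  ∑' u : ℕ, if (u : ℕ∞) < interTime X s n ω
    then γ ^ u * R ((waitTime X s n ω).toNat + u) ω else 0


/-- `u`-step reward law started from `x`. -/
def fstep {S : Type*} [Fintype S] (P : S → S → ℝ≥0∞) (ν : S → Measure ℝ) :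
    ℕ → S → Set ℝ → ℝ≥0∞
  | 0, x, B => ν x B
  | (u + 1), x, B => ∑ y, P x y * fstep P ν u y B

lemma fstep_zero_of {S : Type*} [Fintype S] (P : S → S → ℝ≥0∞) (ν : S → Measure ℝ)
    (B : Set ℝ) (h : ∀ x, ν x B = 0) (u : ℕ) : ∀ x, fstep P ν u x B = 0 := by
  induction u with
  | zero => exact h
  | succ u ih => intro x; simp [fstep, ih]

lemma path_law {S : Type*} [Fintype S] [DecidableEq S] [MeasurableSpace S]
    [MeasurableSingletonClass S]
    {Ω : Type*} [MeasurableSpace Ω] (μ : Measure Ω)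
    (X : ℕ → Ω → S) (R : ℕ → Ω → ℝ)
    (hX : ∀ t, Measurable (X t)) (hR : ∀ t, Measurable (R t))
    (P : S → S → ℝ≥0∞)
    (ν : S → Measure ℝ) (hν : ∀ x, IsProbabilityMeasure (ν x))
    (hlaw : ∀ (t : ℕ) (h : Fin (t + 1) → S) (B : Fin (t + 1) → Set ℝ),
      (∀ i, MeasurableSet (B i)) →
      μ {ω | ∀ i : Fin (t + 1), X i.val ω = h i ∧ R i.val ω ∈ B i}
        = μ {ω | X 0 ω = h 0} * (∏ i : Fin t, P (h i.castSucc) (h i.succ))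
          * ∏ i : Fin (t + 1), ν (h i) (B i))
    (B : Set ℝ) (hB : MeasurableSet B) (u : ℕ) :
    ∀ (k : ℕ) (h : Fin (k + 1) → S),
      μ {ω | (∀ i : Fin (k + 1), X i.val ω = h i) ∧ R (k + u) ω ∈ B}
        = μ {ω | X 0 ω = h 0} * (∏ i : Fin k, P (h i.castSucc) (h i.succ))
          * fstep P ν u (h (Fin.last k)) B := by
  induction u with
  | zero =>
    intro k h
    have := hlaw k h (fun i => if i = Fin.last k then B else Set.univ)
      (by intro i; split_ifs <;> simp [hB])
    rw [Fin.prod_univ_castSucc (fun i => ν (h i) _)] at this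
    simp only [if_true, (Fin.castSucc_lt_last _).ne, if_false, measure_univ,
      Finset.prod_const_one, one_mul] at this
    rw [fstep, ← this]
    congr 1
    ext ω
    simp only [Set.mem_ofPred_eq]
    constructor
    · rintro ⟨h1, h2⟩ i
      refine ⟨h1 i, ?_⟩
      split_ifs with hi
      · subst hi; simpa using h2
      · trivial
    · intro h1
      refine ⟨fun i => (h1 i).1, ?_⟩
      simpa using (h1 (Fin.last k)).2
  | succ u ih =>
    intro k h
    have key : ({ω | (∀ i : Fin (k + 1), X i.val ω = h i) ∧ R (k + (u + 1)) ω ∈ B} : Set Ω)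
        = ⋃ y ∈ (Finset.univ : Finset S), {ω | (∀ i : Fin (k + 1 + 1), X i.val ω = (Fin.snoc h y : Fin (k + 1 + 1) → S) i) ∧
          R (k + 1 + u) ω ∈ B} := by
      ext ω
      simp only [Set.mem_ofPred_eq, Set.mem_iUnion, Fin.forall_fin_succ' (n := k + 1),
        Fin.snoc_castSucc, Fin.snoc_last, Fin.val_castSucc, Fin.val_last,
        show k + (u + 1) = k + 1 + u by omega]
      simp
    have hd : ∀ y z : S, y ≠ z → Disjoint
        {ω | (∀ i : Fin (k + 1 + 1), X i.val ω = (Fin.snoc h y : Fin (k + 1 + 1) → S) i) ∧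
          R (k + 1 + u) ω ∈ B}
        {ω | (∀ i : Fin (k + 1 + 1), X i.val ω = (Fin.snoc h z : Fin (k + 1 + 1) → S) i) ∧
          R (k + 1 + u) ω ∈ B} := by
      intro y z hyz
      rw [Set.disjoint_left]
      rintro ω ⟨h1, -⟩ ⟨h2, -⟩
      have a := h1 (Fin.last _)
      have b := h2 (Fin.last _)
      rw [Fin.snoc_last] at a b
      exact hyz (a.symm.trans b)
    have hm : ∀ y : S, MeasurableSet
        {ω | (∀ i : Fin (k + 1 + 1), X i.val ω = (Fin.snoc h y : Fin (k + 1 + 1) → S) i) ∧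
          R (k + 1 + u) ω ∈ B} := by
      intro y
      have : {ω | (∀ i : Fin (k + 1 + 1), X i.val ω = (Fin.snoc h y : Fin (k + 1 + 1) → S) i) ∧
          R (k + 1 + u) ω ∈ B}
          = (⋂ i : Fin (k + 1 + 1), X i.val ⁻¹' {(Fin.snoc h y : Fin (k + 1 + 1) → S) i})
            ∩ R (k + 1 + u) ⁻¹' B := by
        ext ω; simp
      rw [this]
      refine MeasurableSet.inter ?_ (hR _ hB)
      exact MeasurableSet.iInter fun i => hX _ (measurableSet_singleton _)
    rw [key, measure_biUnion_finset (fun y _ z _ hyz => hd y z hyz) (fun y _ => hm y),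
      fstep, Finset.mul_sum]
    refine Finset.sum_congr rfl fun y _ => ?_
    rw [ih (k + 1) (Fin.snoc h y), Fin.prod_univ_castSucc]
    have e0 : (Fin.snoc h y : Fin (k + 1 + 1) → S) 0 = h 0 :=
      Fin.snoc_castSucc (α := fun _ => S) y h 0
    have e1 : ∀ i : Fin (k + 1), (Fin.snoc h y : Fin (k + 1 + 1) → S) i.castSucc = h i :=
      fun i => Fin.snoc_castSucc (α := fun _ => S) y h i
    have e2 : (Fin.snoc h y : Fin (k + 1 + 1) → S) (Fin.last _) = y :=
      Fin.snoc_last (α := fun _ => S) y h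
    have e3 : ∀ i : Fin k, (Fin.snoc h y : Fin (k + 1 + 1) → S) i.castSucc.succ = h i.succ := by
      intro i
      rw [← e1 i.succ, Fin.succ_castSucc]
    simp only [e0, e1, e2, e3, Fin.succ_last]
    ring

/-- first return at step `k` -/
def retSet {S Ω : Type*} (X : ℕ → Ω → S) (s : S) (k : ℕ) : Set Ω :=
  {ω | 0 < k ∧ X k ω = s ∧ ∀ j, 0 < j → j < k → X j ω ≠ s}

lemma count_le {S Ω : Type*} [DecidableEq S] (X : ℕ → Ω → S) (s : S) (w : ℕ) (ω : Ω)
    (h : ∀ j, 0 < j → j ≤ w → X j ω ≠ s) :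
    (∑ t ∈ Finset.range (w + 1), if X t ω = s then 1 else 0) ≤ 1 := by
  rw [Finset.sum_range_succ', Finset.sum_eq_zero]
  · split_ifs <;> simp
  · intro i hi
    rw [if_neg]
    exact h _ (by omega) (by simp at hi; omega)

lemma wait_one {S Ω : Type*} [DecidableEq S] (X : ℕ → Ω → S) (s : S) (ω : Ω)
    (h0 : X 0 ω = s) : waitTime X s 1 ω = 0 := by
  refine le_antisymm ?_ bot_le
  refine iInf₂_le_of_le 0 ?_ (by simp)
  rw [Finset.sum_range_one, if_pos h0]

lemma inter_of_mem {S Ω : Type*} [DecidableEq S] (X : ℕ → Ω → S) (s : S) (ω : Ω)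
    (h0 : X 0 ω = s) (k : ℕ) (hk : ω ∈ retSet X s k) : interTime X s 1 ω = k := by
  rw [interTime, wait_one X s ω h0, tsub_zero]
  obtain ⟨hk0, hks, hj⟩ := hk
  apply le_antisymm
  · refine iInf₂_le_of_le k ?_ le_rfl
    obtain ⟨m, rfl⟩ : ∃ m, k = m + 1 := ⟨k - 1, by omega⟩
    rw [Finset.sum_range_succ, Finset.sum_range_succ', if_pos h0, if_pos hks]
    omega
  · refine le_iInf₂ fun w hw => ?_
    by_contra hlt
    have hlt : w < k := by simpa using hlt
    have := count_le X s w ω (fun j h1 h2 => hj j h1 (by omega))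
    omega

lemma inter_of_not_mem {S Ω : Type*} [DecidableEq S] (X : ℕ → Ω → S) (s : S) (ω : Ω)
    (h0 : X 0 ω = s) (hk : ∀ k, ω ∉ retSet X s k) : interTime X s 1 ω = ⊤ := by
  rw [interTime, wait_one X s ω h0, tsub_zero]
  have hne : ∀ j, 0 < j → X j ω ≠ s := by
    intro j
    induction j using Nat.strong_induction_on with
    | _ j ih =>
      intro hj hjs
      exact hk j ⟨hj, hjs, fun i hi hij => ih i hij hi⟩
  simp only [waitTime, iInf_eq_top]
  intro w hw
  have := count_le X s w ω (fun j h1 h2 => hne j h1)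
  omega

lemma retSet_disj {S Ω : Type*} (X : ℕ → Ω → S) (s : S) (ω : Ω) (k l : ℕ)
    (hk : ω ∈ retSet X s k) (hl : ω ∈ retSet X s l) : k = l := by
  obtain ⟨hk0, hks, hkj⟩ := hk
  obtain ⟨hl0, hls, hlj⟩ := hl
  rcases lt_trichotomy k l with h | h | h
  · exact absurd hks (hlj k hk0 h)
  · exact h
  · exact absurd hls (hkj l hl0 h)


lemma path_law' {S : Type*} [Fintype S] [DecidableEq S] [MeasurableSpace S]
    [MeasurableSingletonClass S]
    {Ω : Type*} [MeasurableSpace Ω] (μ : Measure Ω)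
    (X : ℕ → Ω → S) (R : ℕ → Ω → ℝ)
    (hX : ∀ t, Measurable (X t)) (hR : ∀ t, Measurable (R t))
    (P : S → S → ℝ≥0∞)
    (ν : S → Measure ℝ) (hν : ∀ x, IsProbabilityMeasure (ν x))
    (hlaw : ∀ (t : ℕ) (h : Fin (t + 1) → S) (B : Fin (t + 1) → Set ℝ),
      (∀ i, MeasurableSet (B i)) →
      μ {ω | ∀ i : Fin (t + 1), X i.val ω = h i ∧ R i.val ω ∈ B i}
        = μ {ω | X 0 ω = h 0} * (∏ i : Fin t, P (h i.castSucc) (h i.succ))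
          * ∏ i : Fin (t + 1), ν (h i) (B i))
    (B : Set ℝ) (hB : MeasurableSet B) (u k : ℕ) (s : S) (F : Set (Fin (k + 1) → S))
    (hF : ∀ h ∈ F, h (Fin.last k) = s) :
    μ ((fun ω (i : Fin (k + 1)) => X i.val ω) ⁻¹' F ∩ R (k + u) ⁻¹' B)
      = μ ((fun ω (i : Fin (k + 1)) => X i.val ω) ⁻¹' F) * fstep P ν u s B := by
  classical
  set Y : Ω → (Fin (k + 1) → S) := fun ω i => X i.val ω with hY
  have hYm : Measurable Y := measurable_pi_lambda _ fun i => hX _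
  have hfin : (F.toFinset : Set (Fin (k + 1) → S)) = F := by simp
  have h1 : ∀ h ∈ F.toFinset, μ.restrict (R (k + u) ⁻¹' B) (Y ⁻¹' {h})
      = μ (Y ⁻¹' {h}) * fstep P ν u s B := by
    intro h hh
    have hs := hF h (by simpa using hh)
    have a := path_law μ X R hX hR P ν hν hlaw B hB u k h
    have b := path_law μ X R hX hR P ν hν hlaw Set.univ MeasurableSet.univ 0 k h
    rw [hs] at a
    simp only [fstep, measure_univ, mul_one, Set.mem_univ, and_true] at b
    have e : Y ⁻¹' {h} = {ω | ∀ i : Fin (k + 1), X i.val ω = h i} := by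
      ext ω; simp [hY, funext_iff]
    rw [Measure.restrict_apply (hYm (measurableSet_singleton h)), e, b, ← a]
    rfl
  have m : ∀ h ∈ F.toFinset, MeasurableSet (Y ⁻¹' {h}) := fun h _ =>
    hYm (measurableSet_singleton h)
  have s1 := sum_measure_preimage_singleton (μ := μ) F.toFinset m
  have s2 := sum_measure_preimage_singleton (μ := μ.restrict (R (k + u) ⁻¹' B)) F.toFinset m
  rw [Finset.sum_congr rfl h1, ← Finset.sum_mul, s1, hfin] at s2
  rw [s2, Measure.restrict_apply (hYm F.toFinite.measurableSet)]

lemma retSet_eq {S Ω : Type*} (X : ℕ → Ω → S) (s : S) (k : ℕ) :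
    retSet X s k = (fun ω (i : Fin (k + 1)) => X i.val ω) ⁻¹'
      {h | 0 < k ∧ h (Fin.last k) = s ∧ ∀ j : Fin (k + 1), 0 < j.val → j.val < k → h j ≠ s} := by
  ext ω
  simp only [retSet, Set.mem_ofPred_eq, Set.mem_preimage, Fin.val_last]
  constructor
  · rintro ⟨a, b, c⟩
    exact ⟨a, b, fun j h1 h2 => c j h1 h2⟩
  · rintro ⟨a, b, c⟩
    exact ⟨a, b, fun j h1 h2 => c ⟨j, by omega⟩ h1 h2⟩

lemma retSet_meas {S : Type*} [Fintype S] [MeasurableSpace S] [MeasurableSingletonClass S]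
    {Ω : Type*} [MeasurableSpace Ω] (X : ℕ → Ω → S) (hX : ∀ t, Measurable (X t)) (s : S) (k : ℕ) :
    MeasurableSet (retSet X s k) := by
  rw [retSet_eq]
  exact (measurable_pi_lambda _ fun i => hX _) (Set.toFinite _).measurableSet

/-- the pathwise decomposition at the first return -/
lemma pathwise {S Ω : Type*} [DecidableEq S] (γ : ℝ) (X : ℕ → Ω → S) (R : ℕ → Ω → ℝ)
    (s : S) (ω : Ω) (h0 : X 0 ω = s) (hs : Summable fun t => γ ^ t * R t ω) :
    loopReward γ X R s 1 ω = (∑' t : ℕ, γ ^ t * R t ω)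
      - ∑' k : ℕ, (retSet X s k).indicator (fun ω => γ ^ k * ∑' u : ℕ, γ ^ u * R (k + u) ω) ω := by
  rw [loopReward, wait_one X s ω h0]
  by_cases hk : ∃ k, ω ∈ retSet X s k
  · obtain ⟨k, hk⟩ := hk
    rw [inter_of_mem X s ω h0 k hk, tsum_eq_single (L := .unconditional ℕ) k (f := fun k =>
      (retSet X s k).indicator (fun ω => γ ^ k * ∑' u : ℕ, γ ^ u * R (k + u) ω) ω),
      Set.indicator_of_mem hk, ← hs.sum_add_tsum_nat_add k, ← tsum_mul_left]
    · rw [tsum_eq_sum (s := Finset.range k)]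
      · have : ∀ u, γ ^ (u + k) * R (u + k) ω = γ ^ k * (γ ^ u * R (k + u) ω) := by
          intro u; rw [add_comm u k]; ring
        simp only [this, add_sub_cancel_right]
        refine Finset.sum_congr rfl fun i hi => ?_
        rw [if_pos (by simpa using hi)]
        simp
      · intro i hi
        rw [if_neg (by simpa using hi)]
    · intro l hl
      exact Set.indicator_of_notMem (fun h => hl (retSet_disj X s ω l k h hk)) _
  · push Not at hk
    rw [inter_of_not_mem X s ω h0 hk]
    simp [Set.indicator_of_notMem (hk _)]

lemma disc_eq {S Ω : Type*} [DecidableEq S] (γ : ℝ) (X : ℕ → Ω → S)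
    (s : S) (ω : Ω) (h0 : X 0 ω = s) :
    discPow γ (interTime X s 1 ω) =
      ∑' k : ℕ, (retSet X s k).indicator (fun _ => γ ^ k) ω := by
  by_cases hk : ∃ k, ω ∈ retSet X s k
  · obtain ⟨k, hk⟩ := hk
    rw [inter_of_mem X s ω h0 k hk, tsum_eq_single k, Set.indicator_of_mem hk, discPow]
    · simp
    · intro l hl
      exact Set.indicator_of_notMem (fun h => hl (retSet_disj X s ω l k h hk)) _
  · push Not at hk
    rw [inter_of_not_mem X s ω h0 hk]
    simp [Set.indicator_of_notMem (hk _), discPow]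

lemma disc_le {S Ω : Type*} [DecidableEq S] (γ : ℝ) (hγ0 : 0 ≤ γ) (hγ1 : γ < 1) (X : ℕ → Ω → S)
    (s : S) (ω : Ω) (h0 : X 0 ω = s) :
    discPow γ (interTime X s 1 ω) ≤ γ := by
  by_cases hk : ∃ k, ω ∈ retSet X s k
  · obtain ⟨k, hk⟩ := hk
    rw [inter_of_mem X s ω h0 k hk, discPow]
    simpa using pow_le_of_le_one hγ0 hγ1.le hk.1.ne'
  · push Not at hk
    rw [inter_of_not_mem X s ω h0 hk]
    simpa [discPow] using hγ0

lemma disc_nonneg (γ : ℝ) (hγ0 : 0 ≤ γ) (n : ℕ∞) : 0 ≤ discPow γ n := by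
  unfold discPow; split_ifs <;> positivity

/-- the loop Bellman equation `v(s) = β(s) + α(s)·v(s)`, equivalently
`v(s) = β(s)/(1-α(s))`, for a finite MRP started at a positive recurrent state `s`. -/
theorem stmt0 {S : Type*} [Fintype S] [DecidableEq S] [MeasurableSpace S]
    [MeasurableSingletonClass S]
    {Ω : Type*} [MeasurableSpace Ω] (μ : Measure Ω) [IsProbabilityMeasure μ]
    (X : ℕ → Ω → S) (R : ℕ → Ω → ℝ)
    (hX : ∀ t, Measurable (X t)) (hR : ∀ t, Measurable (R t))
    (P : S → S → ℝ≥0∞) (hrow : ∀ x, ∑ y, P x y = 1)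
    (ν : S → Measure ℝ) (hν : ∀ x, IsProbabilityMeasure (ν x))
    (rmax : ℝ) (hrmax : 0 ≤ rmax) (hsupp : ∀ x, ν x (Set.Icc 0 rmax)ᶜ = 0)
    -- the joint law of the MRP `(X_t, R_t)` on cylinder sets: Markov transitions for the
    -- states and conditionally independent rewards `R_t ~ ν (X_t)`
    (hlaw : ∀ (t : ℕ) (h : Fin (t + 1) → S) (B : Fin (t + 1) → Set ℝ),
      (∀ i, MeasurableSet (B i)) →
      μ {ω | ∀ i : Fin (t + 1), X i.val ω = h i ∧ R i.val ω ∈ B i}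
        = μ {ω | X 0 ω = h 0} * (∏ i : Fin t, P (h i.castSucc) (h i.succ))
          * ∏ i : Fin (t + 1), ν (h i) (B i))
    (γ : ℝ) (hγ0 : 0 ≤ γ) (hγ1 : γ < 1)
    (s : S)
    -- the chain starts at `s`
    (hstart : μ {ω | X 0 ω = s} = 1)
    -- `s` is positive recurrent: `ρ_s = E_s[H_s^+] < ∞`
    (hrec : ∫⁻ ω, (retTime X s ω : ℝ≥0∞) ∂μ ≠ ⊤) :
    (∫ ω, ∑' t : ℕ, γ ^ t * R t ω ∂μ)
      = (∫ ω, loopReward γ X R s 1 ω ∂μ)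
        + (∫ ω, discPow γ (interTime X s 1 ω) ∂μ) * ∫ ω, ∑' t : ℕ, γ ^ t * R t ω ∂μ
    ∧ (∫ ω, ∑' t : ℕ, γ ^ t * R t ω ∂μ)
      = (∫ ω, loopReward γ X R s 1 ω ∂μ)
        / (1 - ∫ ω, discPow γ (interTime X s 1 ω) ∂μ) := by
  -- almost sure start
  have hst : ∀ᵐ ω ∂μ, X 0 ω = s :=
    (prob_compl_eq_zero_iff (hX 0 (measurableSet_singleton s))).2 hstart
  -- law of the rewards
  have hRlaw : ∀ (u : ℕ) (B : Set ℝ), MeasurableSet B → μ (R u ⁻¹' B) = fstep P ν u s B := by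
    intro u B hB
    have := path_law' μ X R hX hR P ν hν hlaw B hB u 0 s {h | h (Fin.last 0) = s} (fun h hh => hh)
    have e : ((fun ω (i : Fin (0 + 1)) => X i.val ω) ⁻¹' {h | h (Fin.last 0) = s})
        = {ω | X 0 ω = s} := rfl
    rw [e, hstart, one_mul, zero_add] at this
    rw [← this]
    refine measure_congr ?_
    filter_upwards [hst] with ω hω
    apply propext
    exact ⟨fun h => ⟨hω, h⟩, fun h => h.2⟩
  have hRret : ∀ (k u : ℕ) (B : Set ℝ), MeasurableSet B →
      μ (retSet X s k ∩ R (k + u) ⁻¹' B) = μ (retSet X s k) * fstep P ν u s B := by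
    intro k u B hB
    rw [retSet_eq]
    exact path_law' μ X R hX hR P ν hν hlaw B hB u k s _ (fun h hh => hh.2.1)
  have hmA := retSet_meas X hX s
  -- bounds
  have hbd : ∀ᵐ ω ∂μ, ∀ u, R u ω ∈ Set.Icc 0 rmax := by
    rw [ae_all_iff]
    intro u
    have := hRlaw u (Set.Icc 0 rmax)ᶜ measurableSet_Icc.compl
    rw [fstep_zero_of P ν _ hsupp u s] at this
    exact this
  have hnorm : ∀ᵐ ω ∂μ, ∀ u t, ‖γ ^ t * R u ω‖ ≤ γ ^ t * rmax := by
    filter_upwards [hbd] with ω hω u t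
    rw [Real.norm_of_nonneg (mul_nonneg (pow_nonneg hγ0 t) (hω u).1)]
    exact mul_le_mul_of_nonneg_left (hω u).2 (pow_nonneg hγ0 t)
  have hgeo : Summable fun t : ℕ => γ ^ t * rmax :=
    (summable_geometric_of_lt_one hγ0 hγ1).mul_right _
  have hRint : ∀ u, Integrable (R u) μ := by
    intro u
    refine Integrable.of_bound (hR u).aestronglyMeasurable rmax ?_
    filter_upwards [hnorm] with ω hω
    simpa using hω u 0
  -- Markov property in mean
  have hmark : ∀ k u, ∫ ω in retSet X s k, R (k + u) ω ∂μ
      = μ.real (retSet X s k) * ∫ ω, R u ω ∂μ := by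
    intro k u
    have hmap : (μ.restrict (retSet X s k)).map (R (k + u))
        = μ (retSet X s k) • μ.map (R u) := by
      ext B hB
      rw [Measure.map_apply (hR _) hB, Measure.restrict_apply (hR _ hB), Set.inter_comm,
        hRret k u B hB, Measure.smul_apply, Measure.map_apply (hR _) hB, hRlaw u B hB, smul_eq_mul]
    have h1 := integral_map (μ := μ.restrict (retSet X s k)) (hR (k + u)).aemeasurable
      (f := fun x : ℝ => x) aestronglyMeasurable_id
    have h2 := integral_map (μ := μ) (hR u).aemeasurable
      (f := fun x : ℝ => x) aestronglyMeasurable_id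
    rw [← h1, hmap, integral_smul_measure, h2]
    rfl
  -- discounted sums
  set D : ℕ → Ω → ℝ := fun k ω => ∑' u : ℕ, γ ^ u * R (k + u) ω with hD
  have hDm : ∀ k, Measurable (D k) := fun k =>
    Measurable.tsum fun u => (hR _).const_mul _
  set C : ℝ := ∑' t : ℕ, γ ^ t * rmax with hC
  have hC0 : 0 ≤ C := tsum_nonneg fun t => by positivity
  have hDb : ∀ᵐ ω ∂μ, ∀ k, ‖D k ω‖ ≤ C := by
    filter_upwards [hnorm] with ω hω k
    exact tsum_of_norm_bounded hgeo.hasSum fun t => hω _ t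
  have hDint : ∀ k, Integrable (D k) μ := fun k =>
    Integrable.of_bound (hDm k).aestronglyMeasurable C (hDb.mono fun ω h => h k)
  have hsumI : ∀ (m : Measure Ω), m ≤ μ → ∀ k, ∫ ω, D k ω ∂m
      = ∑' u : ℕ, γ ^ u * ∫ ω, R (k + u) ω ∂m := by
    intro m hm k
    haveI : IsFiniteMeasure m := isFiniteMeasure_of_le μ hm
    have hn : ∀ᵐ ω ∂m, ∀ u t, ‖γ ^ t * R u ω‖ ≤ γ ^ t * rmax := ae_mono hm hnorm
    have hi : ∀ u, Integrable (fun ω => γ ^ u * R (k + u) ω) m := fun u =>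
      ((hRint _).mono_measure hm).const_mul _
    rw [← integral_tsum_of_summable_integral_norm hi]
    · simp only [integral_const_mul]
    · refine Summable.of_nonneg_of_le (fun u => integral_nonneg fun ω => norm_nonneg _) (fun u => ?_)
        (hgeo.mul_right (m.real Set.univ))
      calc ∫ ω, ‖γ ^ u * R (k + u) ω‖ ∂m ≤ ∫ ω, γ ^ u * rmax ∂m := by
            refine integral_mono_ae (hi u).norm (integrable_const _) ?_
            filter_upwards [hn] with ω hω
            exact hω _ _
        _ = _ := by rw [integral_const, smul_eq_mul, mul_comm]
  have hD0 : (fun ω => ∑' t : ℕ, γ ^ t * R t ω) = D 0 := by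
    funext ω; simp [hD]
  rw [hD0]
  have hDk : ∀ k, ∫ ω in retSet X s k, D k ω ∂μ = μ.real (retSet X s k) * ∫ ω, D 0 ω ∂μ := by
    intro k
    rw [hsumI _ Measure.restrict_le_self k, hsumI μ le_rfl 0, ← tsum_mul_left]
    refine tsum_congr fun u => ?_
    rw [hmark, zero_add]; ring
  -- the part after the first return
  set Z : ℕ → Ω → ℝ := fun k => (retSet X s k).indicator (fun ω => γ ^ k * D k ω) with hZ
  have hZi : ∀ k, Integrable (Z k) μ := fun k => ((hDint k).const_mul _).indicator (hmA k)
  have hZb : ∀ᵐ ω ∂μ, ∀ k, ‖Z k ω‖ ≤ γ ^ k * C := by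
    filter_upwards [hDb] with ω hω k
    refine (norm_indicator_le_norm_self _ _).trans ?_
    rw [norm_mul, Real.norm_of_nonneg (pow_nonneg hγ0 k)]
    exact mul_le_mul_of_nonneg_left (hω k) (pow_nonneg hγ0 k)
  have hgeoC : Summable fun t : ℕ => γ ^ t * C :=
    (summable_geometric_of_lt_one hγ0 hγ1).mul_right _
  have hZs : Summable fun k => ∫ ω, ‖Z k ω‖ ∂μ := by
    refine Summable.of_nonneg_of_le (fun u => integral_nonneg fun ω => norm_nonneg _) (fun k => ?_)
      hgeoC
    calc ∫ ω, ‖Z k ω‖ ∂μ ≤ ∫ ω, γ ^ k * C ∂μ := by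
          refine integral_mono_ae (hZi k).norm (integrable_const _) ?_
          filter_upwards [hZb] with ω hω
          exact hω _
      _ = _ := by simp
  have hZt := integral_tsum_of_summable_integral_norm hZi hZs
  have hZint : Integrable (fun ω => ∑' k, Z k ω) μ := by
    refine Integrable.of_bound (Measurable.tsum fun k =>
      ((hDm k).const_mul _).indicator (hmA k)).aestronglyMeasurable (∑' k : ℕ, γ ^ k * C) ?_
    filter_upwards [hZb] with ω hω
    exact tsum_of_norm_bounded hgeoC.hasSum hω
  -- loop discount
  have hα : ∫ ω, discPow γ (interTime X s 1 ω) ∂μ = ∑' k, γ ^ k * μ.real (retSet X s k) := by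
    have hi : ∀ k, Integrable ((retSet X s k).indicator (fun _ => γ ^ k)) μ := fun k =>
      (integrable_const _).indicator (hmA k)
    have hv : ∀ k, ∫ ω, (retSet X s k).indicator (fun _ => γ ^ k) ω ∂μ
        = γ ^ k * μ.real (retSet X s k) := by
      intro k
      rw [integral_indicator_const _ (hmA k), smul_eq_mul, mul_comm]
    rw [integral_congr_ae (hst.mono fun ω h => disc_eq γ X s ω h),
      ← integral_tsum_of_summable_integral_norm hi]
    · exact tsum_congr hv
    · have hnn : ∀ k ω, ‖(retSet X s k).indicator (fun _ => γ ^ k) ω‖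
          = (retSet X s k).indicator (fun _ => γ ^ k) ω := fun k ω =>
        Real.norm_of_nonneg (Set.indicator_nonneg (fun _ _ => pow_nonneg hγ0 k) ω)
      simp only [hnn, hv]
      refine Summable.of_nonneg_of_le (fun k => by positivity) (fun k => ?_)
        (summable_geometric_of_lt_one hγ0 hγ1)
      exact mul_le_of_le_one_right (pow_nonneg hγ0 k) measureReal_le_one
  have hαle : ∫ ω, discPow γ (interTime X s 1 ω) ∂μ ≤ γ := by
    calc _ ≤ ∫ ω, γ ∂μ := by
          refine integral_mono_of_nonneg (ae_of_all _ fun ω => disc_nonneg γ hγ0 _)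
            (integrable_const _) ?_
          filter_upwards [hst] with ω h
          exact disc_le γ hγ0 hγ1 X s ω h
      _ = γ := by simp
  have hL : ∫ ω, loopReward γ X R s 1 ω ∂μ = ∫ ω, D 0 ω ∂μ - ∫ ω, ∑' k, Z k ω ∂μ := by
    rw [← integral_sub (hDint 0) hZint]
    refine integral_congr_ae ?_
    filter_upwards [hst, hnorm] with ω h0 hω
    have := pathwise γ X R s ω h0 (Summable.of_norm_bounded hgeo fun t => hω t t)
    rw [this, ← hD0]
  have hZv : ∫ ω, ∑' k, Z k ω ∂μ
      = (∫ ω, discPow γ (interTime X s 1 ω) ∂μ) * ∫ ω, D 0 ω ∂μ := by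
    rw [← hZt, hα, ← tsum_mul_right]
    refine tsum_congr fun k => ?_
    rw [hZ, integral_indicator (hmA k), integral_const_mul, hDk]
    ring
  have hmain : ∫ ω, D 0 ω ∂μ = ∫ ω, loopReward γ X R s 1 ω ∂μ
      + (∫ ω, discPow γ (interTime X s 1 ω) ∂μ) * ∫ ω, D 0 ω ∂μ := by
    rw [hL, hZv]; ring
  refine ⟨hmain, ?_⟩
  rw [eq_div_iff (by linarith)]
  linarith
end
end

section
/- Deterministic error decomposition of the loop estimator: Let (X_t, R_t)_{t≥0} be a finite Markov reward process with X_0 = s, s positive recurrent, and γ ∈ [0,1). Then almost surely, for every n ≥ 1, |v̂_n(s) − v(s)| ≤ (1 − γ)^{-1}·( |β̂_n(s) − β(s)| + |α̂_n(s) − α(s)|·v(s) ), where v̂_n(s) = β̂_n(s)/(1 − α̂_n(s)) is the n-th loop estimator. -/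
open MeasureTheory ProbabilityTheory Filter
open scoped ENNReal ENat

noncomputable section

/-- The empirical mean `α̂_n(s) = (1/n) ∑_{i=1}^n γ^{I_i(s)}` of the loop discounts. -/
def loopAlphaHat {S Ω : Type*} [DecidableEq S] (γ : ℝ) (X : ℕ → Ω → S) (s : S) (n : ℕ)
    (ω : Ω) : ℝ :=
  (∑ i ∈ Finset.Icc 1 n, discPow γ (interTime X s i ω)) / n

/-- The empirical mean `β̂_n(s) = (1/n) ∑_{i=1}^n G_i(s)` of the loop discounted rewards. -/
def loopBetaHat {S Ω : Type*} [DecidableEq S] (γ : ℝ) (X : ℕ → Ω → S) (R : ℕ → Ω → ℝ)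
    (s : S) (n : ℕ) (ω : Ω) : ℝ :=
  (∑ i ∈ Finset.Icc 1 n, loopReward γ X R s i ω) / n

/-- The `n`-th loop estimator `v̂_n(s) = β̂_n(s) / (1 - α̂_n(s))`. -/
def loopEst {S Ω : Type*} [DecidableEq S] (γ : ℝ) (X : ℕ → Ω → S) (R : ℕ → Ω → ℝ)
    (s : S) (n : ℕ) (ω : Ω) : ℝ :=
  loopBetaHat γ X R s n ω / (1 - loopAlphaHat γ X s n ω)

theorem wt_eq {S Ω : Type*} [DecidableEq S] (X : ℕ → Ω → S) (s : S) (n w : ℕ) (ω : Ω)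
    (h1 : n ≤ ∑ t ∈ Finset.range (w + 1), if X t ω = s then 1 else 0)
    (h2 : ∀ w', n ≤ (∑ t ∈ Finset.range (w' + 1), if X t ω = s then 1 else 0) → w ≤ w') :
    waitTime X s n ω = w := by
  unfold waitTime
  apply le_antisymm
  · exact iInf₂_le w h1
  · refine le_iInf₂ fun w' hw' => ?_
    exact_mod_cast h2 w' hw'

theorem cnt_unb {S Ω : Type*} [DecidableEq S] (X : ℕ → Ω → S) (s : S) (ω : Ω)
    (h0 : X 0 ω = s) (hr : ∀ m, X m ω = s → ∃ k, 0 < k ∧ X (m + k) ω = s) (n : ℕ) :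
    ∃ w, X w ω = s ∧ n ≤ ∑ t ∈ Finset.range (w + 1), if X t ω = s then 1 else 0 := by
  induction n with
  | zero => exact ⟨0, h0, Nat.zero_le _⟩
  | succ n ih =>
    obtain ⟨w, hw, hn⟩ := ih
    obtain ⟨k, hk, hs⟩ := hr w hw
    refine ⟨w + k, hs, ?_⟩
    rw [Finset.sum_range_succ, if_pos hs]
    have : ∑ t ∈ Finset.range (w + 1), (if X t ω = s then 1 else 0)
        ≤ ∑ t ∈ Finset.range (w + k), if X t ω = s then 1 else 0 :=
      Finset.sum_le_sum_of_subset (Finset.range_mono (by omega))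
    omega

theorem wt_exists {S Ω : Type*} [DecidableEq S] (X : ℕ → Ω → S) (s : S) (ω : Ω)
    (h0 : X 0 ω = s) (hr : ∀ m, X m ω = s → ∃ k, 0 < k ∧ X (m + k) ω = s) (n : ℕ) :
    ∃ w : ℕ, waitTime X s n ω = w ∧
      (n ≤ ∑ t ∈ Finset.range (w + 1), if X t ω = s then 1 else 0) ∧
      (∀ w', n ≤ (∑ t ∈ Finset.range (w' + 1), if X t ω = s then 1 else 0) → w ≤ w') := by
  have hex : ∃ w, n ≤ ∑ t ∈ Finset.range (w + 1), if X t ω = s then 1 else 0 := by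
    obtain ⟨w, _, h⟩ := cnt_unb X s ω h0 hr n
    exact ⟨w, h⟩
  refine ⟨Nat.find hex, wt_eq X s n _ ω (Nat.find_spec hex) fun w' h => Nat.find_min' hex h,
    Nat.find_spec hex, fun w' h => Nat.find_min' hex h⟩

theorem it_pos {S Ω : Type*} [DecidableEq S] (X : ℕ → Ω → S) (s : S) (ω : Ω)
    (h0 : X 0 ω = s) (hr : ∀ m, X m ω = s → ∃ k, 0 < k ∧ X (m + k) ω = s) (n : ℕ) (hn : 1 ≤ n) :
    ∃ k : ℕ, 0 < k ∧ interTime X s n ω = k := by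
  obtain ⟨a, ha, ha1, ha2⟩ := wt_exists X s ω h0 hr n
  obtain ⟨b, hb, hb1, hb2⟩ := wt_exists X s ω h0 hr (n + 1)
  refine ⟨b - a, ?_, ?_⟩
  · rw [Finset.sum_range_succ] at hb1
    have hle : (if X b ω = s then 1 else 0) ≤ 1 := by split_ifs <;> simp
    cases b with
    | zero => simp at hb1; omega
    | succ b =>
      have := ha2 b (by omega)
      omega
  · unfold interTime
    rw [ha, hb]; norm_cast

theorem it_one {S Ω : Type*} [DecidableEq S] (X : ℕ → Ω → S) (s : S) (ω : Ω)
    (h0 : X 0 ω = s) (m : ℕ) (hm : 0 < m) (hX : X m ω = s)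
    (hlt : ∀ j, 0 < j → j < m → X j ω ≠ s) :
    waitTime X s 1 ω = 0 ∧ interTime X s 1 ω = m := by
  have h1 : waitTime X s 1 ω = (0 : ℕ) := wt_eq X s 1 0 ω (by rw [Finset.sum_range_one, if_pos h0]) (fun _ _ => Nat.zero_le _)
  have h2 : waitTime X s 2 ω = m := by
    apply wt_eq
    · rw [Finset.sum_range_succ, if_pos hX]
      obtain ⟨m, rfl⟩ := Nat.exists_eq_succ_of_ne_zero hm.ne'
      rw [Nat.succ_eq_add_one, Finset.sum_range_succ', if_pos h0]
      omega
    · intro w' h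
      by_contra hc
      push Not at hc
      rw [Finset.sum_range_succ', if_pos h0, Finset.sum_eq_zero] at h
      · omega
      · intro i hi
        rw [if_neg]
        exact hlt _ (by omega) (by simp at hi; omega)
  refine ⟨by simpa using h1, ?_⟩
  unfold interTime
  rw [h2, h1]; simp

theorem disc_le_s1 (γ : ℝ) (h0 : 0 ≤ γ) (h1 : γ < 1) (k : ℕ) (hk : 0 < k) :
    0 ≤ discPow γ (k : ℕ∞) ∧ discPow γ (k : ℕ∞) ≤ γ := by
  unfold discPow
  rw [if_neg (by simp)]
  simp only [ENat.toNat_natCast]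
  exact ⟨by positivity, pow_le_of_le_one h0 h1.le hk.ne'⟩

theorem det_final (γ v α β a b : ℝ) (h1 : γ < 1) (ha : a ≤ γ) (hv : 0 ≤ v)
    (hb : v = β + α * v) :
    |b / (1 - a) - v| ≤ (1 - γ)⁻¹ * (|b - β| + |a - α| * v) := by
  have hp : 0 < 1 - a := by linarith
  have : b / (1 - a) - v = (1 - a)⁻¹ * ((b - β) + (a - α) * v) := by
    field_simp
    linarith
  rw [this, abs_mul, abs_of_pos (inv_pos.2 hp)]
  have h2 : |(b - β) + (a - α) * v| ≤ |b - β| + |a - α| * v := by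
    refine (abs_add_le _ _).trans ?_
    rw [abs_mul, abs_of_nonneg hv]
  have h3 : (1 - a)⁻¹ ≤ (1 - γ)⁻¹ := by
    apply inv_anti₀ <;> linarith
  apply mul_le_mul h3 h2 (abs_nonneg _)
  exact inv_nonneg.2 (by linarith)

/-- Pointwise split of the discounted return. -/
theorem split_pt {S Ω : Type*} [DecidableEq S] (X : ℕ → Ω → S) (R : ℕ → Ω → ℝ) (s : S) (ω : Ω)
    (γ rmax : ℝ) (hγ0 : 0 ≤ γ) (hγ1 : γ < 1)
    (h0 : X 0 ω = s) (m : ℕ) (hm : 0 < m) (hX : X m ω = s)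
    (hlt : ∀ j, 0 < j → j < m → X j ω ≠ s) (hR : ∀ t, R t ω ∈ Set.Icc 0 rmax) :
    loopReward γ X R s 1 ω = (∑ u ∈ Finset.range m, γ ^ u * R u ω) ∧
    ∑' t, γ ^ t * R t ω = loopReward γ X R s 1 ω + γ ^ m * ∑' t, γ ^ t * R (m + t) ω := by
  obtain ⟨w1, i1⟩ := it_one X s ω h0 m hm hX hlt
  have e : loopReward γ X R s 1 ω = (∑ u ∈ Finset.range m, γ ^ u * R u ω) := by
    unfold loopReward
    rw [i1, w1, tsum_eq_sum (s := Finset.range m)]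
    · apply Finset.sum_congr rfl
      intro u hu
      rw [if_pos (by simpa using hu)]
      simp
    · intro u hu
      rw [if_neg (by simpa using hu)]
  refine ⟨e, ?_⟩
  have hs : Summable fun t => γ ^ t * R t ω := by
    refine Summable.of_nonneg_of_le (fun t => mul_nonneg (pow_nonneg hγ0 t) (hR t).1)
      (fun t => mul_le_mul_of_nonneg_left (hR t).2 (pow_nonneg hγ0 t))
      ((summable_geometric_of_lt_one hγ0 hγ1).mul_right rmax)
  rw [e, ← hs.sum_add_tsum_nat_add m, ← tsum_mul_left]
  congr 1
  apply tsum_congr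
  intro t
  rw [pow_add, add_comm t m]; ring

theorem int_tsum {Ω : Type*} [MeasurableSpace Ω] (μ : Measure Ω) [IsFiniteMeasure μ]
    (f : ℕ → Ω → ℝ) (hf : ∀ t, Measurable (f t)) (γ C : ℝ) (hγ0 : 0 ≤ γ) (hγ1 : γ < 1)
    (hb : ∀ᵐ ω ∂μ, ∀ t, f t ω ∈ Set.Icc 0 C) :
    ∫ ω, ∑' t, γ ^ t * f t ω ∂μ = ∑' t, γ ^ t * ∫ ω, f t ω ∂μ := by
  have hb' : ∀ t, ∀ᵐ ω ∂μ, ‖γ ^ t * f t ω‖ ≤ γ ^ t * C := by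
    intro t
    filter_upwards [hb] with ω h
    rw [Real.norm_eq_abs, abs_mul, abs_of_nonneg (pow_nonneg hγ0 t), abs_of_nonneg (h t).1]
    exact mul_le_mul_of_nonneg_left (h t).2 (pow_nonneg hγ0 t)
  have hi : ∀ t, Integrable (fun ω => γ ^ t * f t ω) μ := fun t =>
    Integrable.of_bound ((hf t).const_mul _).aestronglyMeasurable _ (hb' t)
  rw [← integral_tsum_of_summable_integral_norm hi]
  · simp_rw [integral_const_mul]
  · refine Summable.of_nonneg_of_le (fun t => integral_nonneg fun _ => norm_nonneg _) (fun t => ?_)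
      ((summable_geometric_of_lt_one hγ0 hγ1).mul_right (C * μ.real Set.univ))
    calc _ ≤ ∫ ω, γ ^ t * C ∂μ := integral_mono_ae (hi t).norm (integrable_const _) (hb' t)
      _ = _ := by simp; ring

/-- The joint law of the process, indexed by natural numbers. -/
def PathLaw {S Ω : Type*} [MeasurableSpace Ω] (μ : Measure Ω) (X : ℕ → Ω → S) (R : ℕ → Ω → ℝ)
    (P : S → S → ℝ≥0∞) (ν : S → Measure ℝ) : Prop :=
  ∀ (t : ℕ) (h : ℕ → S) (B : ℕ → Set ℝ), (∀ i, MeasurableSet (B i)) →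
      μ {ω | ∀ i ≤ t, X i ω = h i ∧ R i ω ∈ B i}
        = μ {ω | X 0 ω = h 0} * (∏ i ∈ Finset.range t, P (h i) (h (i + 1)))
          * ∏ i ∈ Finset.range (t + 1), ν (h i) (B i)

theorem pathLaw_of {S Ω : Type*} [MeasurableSpace Ω] (μ : Measure Ω) (X : ℕ → Ω → S)
    (R : ℕ → Ω → ℝ) (P : S → S → ℝ≥0∞) (ν : S → Measure ℝ)
    (hlaw : ∀ (t : ℕ) (h : Fin (t + 1) → S) (B : Fin (t + 1) → Set ℝ),
      (∀ i, MeasurableSet (B i)) →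
      μ {ω | ∀ i : Fin (t + 1), X i.val ω = h i ∧ R i.val ω ∈ B i}
        = μ {ω | X 0 ω = h 0} * (∏ i : Fin t, P (h i.castSucc) (h i.succ))
          * ∏ i : Fin (t + 1), ν (h i) (B i)) : PathLaw μ X R P ν := by
  intro t h B hB
  have := hlaw t (fun i => h i) (fun i => B i) (fun i => hB i)
  rw [Finset.prod_range, Finset.prod_range]
  simp only [Fin.val_castSucc, Fin.val_succ, Fin.val_zero] at this
  rw [← this]
  congr 1
  ext ω
  simp only [Set.mem_ofPred_eq]
  constructor
  · intro H i
    exact H i (by omega)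
  · intro H i hi
    exact H ⟨i, by omega⟩

theorem path_one {S Ω : Type*} [MeasurableSpace Ω] (μ : Measure Ω) (X : ℕ → Ω → S)
    (R : ℕ → Ω → ℝ) (P : S → S → ℝ≥0∞) (ν : S → Measure ℝ) (hν : ∀ x, IsProbabilityMeasure (ν x))
    (hL : PathLaw μ X R P ν) (t : ℕ) (g : ℕ → S) (B : Set ℝ) (hB : MeasurableSet B) :
    μ {ω | (∀ i ≤ t, X i ω = g i) ∧ R t ω ∈ B}
      = μ {ω | X 0 ω = g 0} * (∏ i ∈ Finset.range t, P (g i) (g (i + 1))) * ν (g t) B := by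
  have := hL t g (fun i => if i = t then B else Set.univ)
    (fun i => by split_ifs; exacts [hB, MeasurableSet.univ])
  rw [Finset.prod_range_succ (fun i => ν (g i) _), Finset.prod_eq_one (s := Finset.range t) (f := fun i => ν (g i) _), if_pos rfl, one_mul] at this
  · rw [← this]
    congr 1
    ext ω
    simp only [Set.mem_ofPred_eq]
    constructor
    · rintro ⟨h1, h2⟩ i hi
      refine ⟨h1 i hi, ?_⟩
      split_ifs with h
      · subst h; exact h2
      · trivial
    · intro H
      refine ⟨fun i hi => (H i hi).1, ?_⟩
      simpa using (H t le_rfl).2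
  · intro i hi
    rw [if_neg (by simp at hi; omega)]
    exact measure_univ

theorem path_two {S Ω : Type*} [MeasurableSpace Ω] (μ : Measure Ω)
    (X : ℕ → Ω → S)
    (R : ℕ → Ω → ℝ) (P : S → S → ℝ≥0∞) (ν : S → Measure ℝ) (hν : ∀ x, IsProbabilityMeasure (ν x))
    (hL : PathLaw μ X R P ν) (s : S) (hs1 : μ {ω | X 0 ω = s} = 1)
    (hs0 : ∀ x, x ≠ s → μ {ω | X 0 ω = x} = 0)
    (m t : ℕ) (h g : ℕ → S) (hm : h m = s) (B : Set ℝ) (hB : MeasurableSet B) :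
    μ {ω | (∀ i ≤ m, X i ω = h i) ∧ (∀ i ≤ t, X (m + i) ω = g i) ∧ R (m + t) ω ∈ B}
      = μ {ω | ∀ i ≤ m, X i ω = h i} * μ {ω | (∀ i ≤ t, X i ω = g i) ∧ R t ω ∈ B} := by
  by_cases hg : g 0 = s
  · have e1 : {ω | (∀ i ≤ m, X i ω = h i) ∧ (∀ i ≤ t, X (m + i) ω = g i) ∧ R (m + t) ω ∈ B}
        = {ω | (∀ i ≤ m + t, X i ω = (if i < m then h i else g (i - m))) ∧ R (m + t) ω ∈ B} := by
      ext ω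
      simp only [Set.mem_ofPred_eq]
      constructor
      · rintro ⟨h1, h2, h3⟩
        refine ⟨fun i hi => ?_, h3⟩
        split_ifs with hlt
        · exact h1 i hlt.le
        · have := h2 (i - m) (by omega)
          rwa [Nat.add_sub_cancel' (by omega)] at this
      · rintro ⟨h1, h3⟩
        refine ⟨fun i hi => ?_, fun i hi => ?_, h3⟩
        · have := h1 i (by omega)
          rcases hi.lt_or_eq with hlt | rfl
          · rwa [if_pos hlt] at this
          · simpa [hg, ← hm] using this
        · have := h1 (m + i) (by omega)
          simpa using this
    have e2 : {ω | ∀ i ≤ m, X i ω = h i} = {ω | (∀ i ≤ m, X i ω = h i) ∧ R m ω ∈ Set.univ} := by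
      simp
    rw [e1, e2, path_one μ X R P ν hν hL _ _ _ hB, path_one μ X R P ν hν hL _ _ _ hB,
      path_one μ X R P ν hν hL _ _ _ MeasurableSet.univ, Finset.prod_range_add, hg, hs1,
      measure_univ]
    have e3 : ∏ x ∈ Finset.range m, P (if x < m then h x else g (x - m))
          (if x + 1 < m then h (x + 1) else g (x + 1 - m))
        = ∏ x ∈ Finset.range m, P (h x) (h (x + 1)) := by
      apply Finset.prod_congr rfl
      intro x hx
      simp only [Finset.mem_range] at hx
      rw [if_pos hx]
      split_ifs with h1
      · rfl
      · have : x + 1 = m := by omega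
        rw [this, Nat.sub_self, hg, hm]
    have e4 : (if 0 < m then h 0 else g (0 - m)) = h 0 := by
      split_ifs with h1
      · rfl
      · have : m = 0 := by omega
        subst this
        rw [hm]; exact hg
    rw [e3, e4]
    simp only [add_assoc, not_lt, le_add_iff_nonneg_right, zero_le, add_tsub_cancel_left,
      add_lt_iff_neg_left, not_lt_zero, if_false, one_mul, mul_one, Nat.not_lt_zero]
    ring
  · have z1 : μ {ω | (∀ i ≤ t, X i ω = g i) ∧ R t ω ∈ B} = 0 :=
      measure_mono_null (fun ω hω => hω.1 0 (Nat.zero_le _)) (hs0 _ hg)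
    rw [z1, mul_zero]
    convert measure_empty (μ := μ)
    ext ω
    simp only [Set.mem_ofPred_eq, Set.mem_empty_iff_false, iff_false]
    rintro ⟨h1, h2, -⟩
    apply hg
    rw [← h2 0 (Nat.zero_le _), ← hm, ← h1 m le_rfl]
    rfl

/-- Extension of a finite path. -/
def extPath {S : Type*} (s : S) (m : ℕ) (h : Fin (m + 1) → S) (i : ℕ) : S :=
  if hi : i < m + 1 then h ⟨i, hi⟩ else s

theorem extPath_iff {S : Type*} (s : S) (m : ℕ) (h : Fin (m + 1) → S) (x : ℕ → S) :
    (∀ i ≤ m, x i = extPath s m h i) ↔ (fun i : Fin (m + 1) => x i) = h := by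
  constructor
  · intro H
    ext ⟨i, hi⟩
    have := H i (by omega)
    rwa [extPath, dif_pos hi] at this
  · rintro rfl i hi
    rw [extPath, dif_pos (by omega)]

theorem sum_fiber {Ω F : Type*} [MeasurableSpace Ω] [Fintype F] [MeasurableSpace F]
    [MeasurableSingletonClass F] (μ : Measure Ω) (Y : Ω → F) (hY : Measurable Y) (H : Finset F)
    (E : Set Ω) (hE : MeasurableSet E) :
    μ {ω | Y ω ∈ H ∧ ω ∈ E} = ∑ y ∈ H, μ {ω | Y ω = y ∧ ω ∈ E} := by
  have h1 := sum_measure_preimage_singleton (μ := μ.restrict E) H (f := Y)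
    (fun y _ => hY (measurableSet_singleton y))
  rw [Measure.restrict_apply' hE] at h1
  have e : {ω | Y ω ∈ H ∧ ω ∈ E} = Y ⁻¹' ↑H ∩ E := by ext; simp
  rw [e, ← h1]
  apply Finset.sum_congr rfl
  intro y _
  rw [Measure.restrict_apply' hE]
  rfl

theorem markov {S Ω : Type*} [Fintype S] [DecidableEq S] [MeasurableSpace S]
    [MeasurableSingletonClass S] [MeasurableSpace Ω] (μ : Measure Ω)
    (X : ℕ → Ω → S)
    (R : ℕ → Ω → ℝ) (hX : ∀ t, Measurable (X t)) (hR : ∀ t, Measurable (R t))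
    (P : S → S → ℝ≥0∞) (ν : S → Measure ℝ) (hν : ∀ x, IsProbabilityMeasure (ν x))
    (hL : PathLaw μ X R P ν) (s : S) (hs1 : μ {ω | X 0 ω = s} = 1)
    (hs0 : ∀ x, x ≠ s → μ {ω | X 0 ω = x} = 0)
    (m t : ℕ) (H : Set (Fin (m + 1) → S)) (hH : ∀ h ∈ H, h (Fin.last m) = s)
    (C : Set (Fin (t + 1) → S)) (B : Set ℝ) (hB : MeasurableSet B) :
    μ {ω | (fun i : Fin (m + 1) => X i ω) ∈ H ∧ (fun i : Fin (t + 1) => X (m + i) ω) ∈ C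
        ∧ R (m + t) ω ∈ B}
      = μ {ω | (fun i : Fin (m + 1) => X i ω) ∈ H}
        * μ {ω | (fun i : Fin (t + 1) => X i ω) ∈ C ∧ R t ω ∈ B} := by
  classical
  have f1 := sum_fiber μ
    (fun ω => ((fun i : Fin (m + 1) => X i ω), (fun i : Fin (t + 1) => X (m + i) ω)))
    (by fun_prop) (H.toFinset ×ˢ C.toFinset) {ω | R (m + t) ω ∈ B} (hR _ hB)
  have f2 := sum_fiber μ (fun ω => (fun i : Fin (m + 1) => X i ω)) (by fun_prop) H.toFinset
    Set.univ MeasurableSet.univ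
  have f3 := sum_fiber μ (fun ω => (fun i : Fin (t + 1) => X i ω)) (by fun_prop) C.toFinset
    {ω | R t ω ∈ B} (hR _ hB)
  simp only [Finset.mem_product, Set.mem_toFinset, Set.mem_ofPred_eq, Set.mem_univ, and_true,
    and_assoc, Prod.mk.injEq] at f1 f2 f3
  rw [f1, f2, f3, Finset.sum_product, Finset.sum_mul_sum]
  apply Finset.sum_congr rfl
  intro h hh
  apply Finset.sum_congr rfl
  intro g _
  have := path_two μ X R P ν hν hL s hs1 hs0 m t (extPath s m h) (extPath s t g)
    (by rw [extPath, dif_pos (by omega)]; exact hH h (by simpa using hh)) B hB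
  convert this using 3
  · ext ω
    rw [Prod.mk.injEq, and_assoc, ← extPath_iff s m h (fun i => X i ω), ← extPath_iff s t g (fun i => X (m + i) ω)]
  · ext ω
    simp only [Set.mem_ofPred_eq]
    rw [← extPath_iff s m h (fun i => X i ω)]
  · ext ω
    simp only [Set.mem_ofPred_eq]
    rw [← extPath_iff s t g (fun i => X i ω)]

theorem ae_bdd {S Ω : Type*} [Fintype S] [DecidableEq S] [MeasurableSpace S]
    [MeasurableSingletonClass S] [MeasurableSpace Ω] (μ : Measure Ω)
    (X : ℕ → Ω → S)
    (R : ℕ → Ω → ℝ) (hX : ∀ t, Measurable (X t)) (hR : ∀ t, Measurable (R t))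
    (P : S → S → ℝ≥0∞) (ν : S → Measure ℝ) (hν : ∀ x, IsProbabilityMeasure (ν x))
    (hL : PathLaw μ X R P ν) (s : S) (rmax : ℝ) (hsupp : ∀ x, ν x (Set.Icc 0 rmax)ᶜ = 0) :
    ∀ᵐ ω ∂μ, ∀ t, R t ω ∈ Set.Icc 0 rmax := by
  rw [ae_all_iff]
  intro t
  have hB : MeasurableSet (Set.Icc 0 rmax)ᶜ := measurableSet_Icc.compl
  have f3 := sum_fiber μ (fun ω => (fun i : Fin (t + 1) => X i ω)) (by fun_prop) Finset.univ
    {ω | R t ω ∈ (Set.Icc 0 rmax)ᶜ} (hR _ hB)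
  rw [Finset.sum_eq_zero] at f3
  · rw [ae_iff]
    simpa only [Finset.mem_univ, true_and, Set.mem_ofPred_eq, Set.mem_compl_iff] using f3
  · intro g _
    have := path_one μ X R P ν hν hL t (extPath s t g) _ hB
    rw [hsupp, mul_zero] at this
    rw [← this]
    congr 1
    ext ω
    simp only [Set.mem_ofPred_eq]
    rw [← extPath_iff s t g (fun i => X i ω)]

theorem ae_ret {S Ω : Type*} [Fintype S] [DecidableEq S] [MeasurableSpace S]
    [MeasurableSingletonClass S] [MeasurableSpace Ω] (μ : Measure Ω) [IsProbabilityMeasure μ]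
    (X : ℕ → Ω → S)
    (R : ℕ → Ω → ℝ) (hX : ∀ t, Measurable (X t)) (hR : ∀ t, Measurable (R t))
    (P : S → S → ℝ≥0∞) (ν : S → Measure ℝ) (hν : ∀ x, IsProbabilityMeasure (ν x))
    (hL : PathLaw μ X R P ν) (s : S) (hs1 : μ {ω | X 0 ω = s} = 1)
    (hs0 : ∀ x, x ≠ s → μ {ω | X 0 ω = x} = 0)
    (hrec : ∫⁻ ω, (retTime X s ω : ℝ≥0∞) ∂μ ≠ ⊤) :
    ∀ᵐ ω ∂μ, ∀ m, X m ω = s → ∃ k, 0 < k ∧ X (m + k) ω = s := by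
  set N : ℕ → Set Ω := fun K => {ω | ∀ k, 0 < k → k ≤ K → X k ω ≠ s} with hN
  have hNm : ∀ K, MeasurableSet (N K) := by
    intro K
    have : N K = ⋂ k : ℕ, ⋂ (_ : 0 < k), ⋂ (_ : k ≤ K), (X k ⁻¹' {s})ᶜ := by
      ext ω; simp [hN]
    rw [this]
    exact MeasurableSet.iInter fun k => MeasurableSet.iInter fun _ => MeasurableSet.iInter fun _ =>
      (hX k (measurableSet_singleton s)).compl
  have hz : μ (⋂ K, N K) = 0 := by
    by_contra hne
    apply hrec
    rw [eq_top_iff]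
    calc (⊤ : ℝ≥0∞) = ⊤ * μ (⋂ K, N K) := (ENNReal.top_mul hne).symm
      _ = ∫⁻ ω, (⋂ K, N K).indicator (fun _ => ⊤) ω ∂μ := by
        rw [lintegral_indicator_const (MeasurableSet.iInter hNm)]
      _ ≤ _ := by
        apply lintegral_mono
        intro ω
        by_cases hω : ω ∈ ⋂ K, N K
        · rw [Set.indicator_of_mem hω]
          have : retTime X s ω = ⊤ := by
            unfold retTime
            rw [iInf₂_eq_top]
            rintro k ⟨hk, hk2⟩
            exact absurd hk2 (Set.mem_iInter.1 hω k k hk le_rfl)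
          simp [this]
        · rw [Set.indicator_of_notMem hω]; exact zero_le
  have hT := tendsto_measure_iInter_atTop (μ := μ) (fun K => (hNm K).nullMeasurableSet)
    (fun a b hab ω hω k hk hka => hω k hk (hka.trans hab)) ⟨0, measure_ne_top _ _⟩
  rw [hz] at hT
  rw [ae_all_iff]
  intro m
  rw [ae_iff]
  refine le_antisymm (ge_of_tendsto' hT fun K => ?_) zero_le
  have hM := markov μ X R hX hR P ν hν hL s hs1 hs0 m K {h | h (Fin.last m) = s} (fun _ h => h)
    {g | ∀ k : Fin (K + 1), 0 < k.val → g k ≠ s} Set.univ MeasurableSet.univ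
  calc _ ≤ _ := measure_mono ?_
    _ = _ := hM
    _ ≤ 1 * μ (N K) := by
      refine mul_le_mul' prob_le_one (measure_mono ?_)
      rintro ω ⟨h, -⟩ k hk hkK
      exact h ⟨k, by omega⟩ hk
    _ = _ := by simp
  intro ω hω
  simp only [Set.mem_ofPred_eq, not_forall, not_exists, not_and] at hω
  obtain ⟨h1, h2⟩ := hω
  exact ⟨h1, fun k hk => h2 k hk, trivial⟩

theorem shift_int {S Ω : Type*} [Fintype S] [DecidableEq S] [MeasurableSpace S]
    [MeasurableSingletonClass S] [MeasurableSpace Ω] (μ : Measure Ω)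
    (X : ℕ → Ω → S)
    (R : ℕ → Ω → ℝ) (hX : ∀ t, Measurable (X t)) (hR : ∀ t, Measurable (R t))
    (P : S → S → ℝ≥0∞) (ν : S → Measure ℝ) (hν : ∀ x, IsProbabilityMeasure (ν x))
    (hL : PathLaw μ X R P ν) (s : S) (hs1 : μ {ω | X 0 ω = s} = 1)
    (hs0 : ∀ x, x ≠ s → μ {ω | X 0 ω = x} = 0)
    (m t : ℕ) (H : Set (Fin (m + 1) → S)) (hH : ∀ h ∈ H, h (Fin.last m) = s) :
    ∫ ω in {ω | (fun i : Fin (m + 1) => X i ω) ∈ H}, R (m + t) ω ∂μ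
      = μ.real {ω | (fun i : Fin (m + 1) => X i ω) ∈ H} * ∫ ω, R t ω ∂μ := by
  have key : Measure.map (R (m + t)) (μ.restrict {ω | (fun i : Fin (m + 1) => X i ω) ∈ H})
      = μ {ω | (fun i : Fin (m + 1) => X i ω) ∈ H} • Measure.map (R t) μ := by
    ext B hB
    rw [Measure.map_apply (hR _) hB, Measure.restrict_apply (hR _ hB), Measure.smul_apply,
      Measure.map_apply (hR _) hB, smul_eq_mul]
    have := markov μ X R hX hR P ν hν hL s hs1 hs0 m t H hH Set.univ B hB
    simp only [Set.mem_univ, true_and] at this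
    rw [Set.inter_comm]
    exact this
  have e1 := integral_map (μ := μ.restrict {ω | (fun i : Fin (m + 1) => X i ω) ∈ H})
    (hR (m + t)).aemeasurable (f := fun x : ℝ => x) (by fun_prop)
  have e2 := integral_map (μ := μ) (hR t).aemeasurable (f := fun x : ℝ => x) (by fun_prop)
  rw [← e1, ← e2, key, integral_smul_measure]
  rfl

theorem renewal {S Ω : Type*} [Fintype S] [DecidableEq S] [MeasurableSpace S]
    [MeasurableSingletonClass S] [MeasurableSpace Ω] (μ : Measure Ω) [IsProbabilityMeasure μ]
    (X : ℕ → Ω → S)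
    (R : ℕ → Ω → ℝ) (hX : ∀ t, Measurable (X t)) (hR : ∀ t, Measurable (R t))
    (P : S → S → ℝ≥0∞) (ν : S → Measure ℝ) (hν : ∀ x, IsProbabilityMeasure (ν x))
    (rmax : ℝ) (hrmax : 0 ≤ rmax)
    (hL : PathLaw μ X R P ν) (γ : ℝ) (hγ0 : 0 ≤ γ) (hγ1 : γ < 1)
    (s : S) (hs1 : μ {ω | X 0 ω = s} = 1)
    (hs0 : ∀ x, x ≠ s → μ {ω | X 0 ω = x} = 0)
    (hS0 : ∀ᵐ ω ∂μ, X 0 ω = s)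
    (hbd : ∀ᵐ ω ∂μ, ∀ t, R t ω ∈ Set.Icc 0 rmax)
    (hret : ∀ᵐ ω ∂μ, ∀ m, X m ω = s → ∃ k, 0 < k ∧ X (m + k) ω = s) :
    ∫ ω, ∑' t : ℕ, γ ^ t * R t ω ∂μ = ∫ ω, loopReward γ X R s 1 ω ∂μ
      + (∫ ω, discPow γ (interTime X s 1 ω) ∂μ) * ∫ ω, ∑' t : ℕ, γ ^ t * R t ω ∂μ := by
  set H : (m : ℕ) → Set (Fin (m + 1) → S) := fun m =>
    {h | h (Fin.last m) = s ∧ 0 < m ∧ ∀ j : Fin (m + 1), 0 < j.val → j.val < m → h j ≠ s} with hH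
  set T : ℕ → Set Ω := fun m => {ω | (fun i : Fin (m + 1) => X i ω) ∈ H m} with hT
  have hTi : ∀ m ω, ω ∈ T m ↔ X m ω = s ∧ 0 < m ∧ ∀ j, 0 < j → j < m → X j ω ≠ s := by
    intro m ω
    constructor
    · rintro ⟨h1, h2, h3⟩
      exact ⟨h1, h2, fun j hj hjm => h3 ⟨j, by omega⟩ hj hjm⟩
    · rintro ⟨h1, h2, h3⟩
      exact ⟨h1, h2, fun j hj hjm => h3 j hj hjm⟩
  have hTm : ∀ m, MeasurableSet (T m) := by
    intro m
    have : Measurable (fun ω => (fun i : Fin (m + 1) => X i ω)) := by fun_prop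
    exact this (Set.toFinite (H m)).measurableSet
  have hTd : Pairwise (Function.onFun Disjoint T) := by
    intro a b hab
    rw [Function.onFun, Set.disjoint_left]
    intro ω ha hb
    obtain ⟨a1, a2, a3⟩ := (hTi a ω).1 ha
    obtain ⟨b1, b2, b3⟩ := (hTi b ω).1 hb
    rcases lt_or_gt_of_ne hab with h | h
    · exact b3 a a2 h a1
    · exact a3 b b2 h b1
  have hTu : ∀ᵐ ω ∂μ, ∃ m, ω ∈ T m := by
    filter_upwards [hS0, hret] with ω h0 hr
    have hex : ∃ k, 0 < k ∧ X k ω = s := by simpa using hr 0 h0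
    refine ⟨Nat.find hex, (hTi _ _).2 ⟨(Nat.find_spec hex).2, (Nat.find_spec hex).1, ?_⟩⟩
    intro j hj hlt hc
    exact Nat.find_min hex hlt ⟨hj, hc⟩
  have hres : μ.restrict (⋃ m, T m) = μ := by
    rw [Measure.restrict_eq_self_of_ae_mem]
    filter_upwards [hTu] with ω h
    exact Set.mem_iUnion.2 h
  have hsplit : ∀ f : Ω → ℝ, Integrable f μ → HasSum (fun m => ∫ ω in T m, f ω ∂μ) (∫ ω, f ω ∂μ) := by
    intro f hf
    have := hasSum_integral_iUnion (μ := μ) hTm hTd hf.integrableOn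
    rwa [hres] at this
  have hint : ∀ (f : Ω → ℝ) (F : ℕ → Ω → ℝ) (C : ℝ), (∀ m, Measurable (F m)) →
      (∀ᵐ ω ∂μ, ∀ m, ω ∈ T m → f ω = F m ω) → (∀ᵐ ω ∂μ, ‖f ω‖ ≤ C) → Integrable f μ := by
    intro f F C hF hfF hC
    refine Integrable.of_bound ?_ C hC
    rw [← hres, aestronglyMeasurable_iUnion_iff]
    intro m
    refine (hF m).aestronglyMeasurable.congr ?_
    filter_upwards [ae_restrict_of_ae hfF, ae_restrict_mem (hTm m)] with ω h1 h2
    exact (h1 m h2).symm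
  have hgeo := summable_geometric_of_lt_one hγ0 hγ1
  -- pointwise facts
  have hpt : ∀ᵐ ω ∂μ, ∀ m, ω ∈ T m →
      loopReward γ X R s 1 ω = (∑ u ∈ Finset.range m, γ ^ u * R u ω) ∧
      ∑' t, γ ^ t * R t ω = loopReward γ X R s 1 ω + γ ^ m * ∑' t, γ ^ t * R (m + t) ω := by
    filter_upwards [hS0, hbd] with ω h0 hb m hm
    obtain ⟨a1, a2, a3⟩ := (hTi m ω).1 hm
    exact split_pt X R s ω γ rmax hγ0 hγ1 h0 m a2 a1 a3 hb
  have hdp : ∀ᵐ ω ∂μ, ∀ m, ω ∈ T m → discPow γ (interTime X s 1 ω) = γ ^ m := by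
    filter_upwards [hS0] with ω h0 m hm
    obtain ⟨a1, a2, a3⟩ := (hTi m ω).1 hm
    rw [(it_one X s ω h0 m a2 a1 a3).2, discPow, if_neg (by simp)]
    simp
  have hsum : ∀ᵐ ω ∂μ, ∀ m, Summable (fun t => γ ^ t * R (m + t) ω) := by
    filter_upwards [hbd] with ω hb m
    exact Summable.of_nonneg_of_le (fun t => mul_nonneg (pow_nonneg hγ0 t) (hb _).1)
      (fun t => mul_le_mul_of_nonneg_left (hb _).2 (pow_nonneg hγ0 t)) (hgeo.mul_right rmax)
  have hVm : ∀ m, Measurable (fun ω => ∑' t, γ ^ t * R (m + t) ω) := by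
    intro m
    exact Measurable.tsum fun t => (hR _).const_mul _
  have hVb : ∀ᵐ ω ∂μ, ‖∑' t, γ ^ t * R t ω‖ ≤ ∑' t, γ ^ t * rmax := by
    filter_upwards [hbd, hsum] with ω hb hs
    have hs := hs 0
    simp only [zero_add] at hs
    rw [Real.norm_eq_abs, abs_of_nonneg (tsum_nonneg fun t => mul_nonneg (pow_nonneg hγ0 t) (hb t).1)]
    exact hs.tsum_le_tsum (fun t => mul_le_mul_of_nonneg_left (hb t).2 (pow_nonneg hγ0 t))
      (hgeo.mul_right rmax)
  have iV : Integrable (fun ω => ∑' t, γ ^ t * R t ω) μ :=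
    Integrable.of_bound (by simpa using (hVm 0).aestronglyMeasurable) _ hVb
  have iG : Integrable (fun ω => loopReward γ X R s 1 ω) μ := by
    refine hint _ (fun m ω => ∑ u ∈ Finset.range m, γ ^ u * R u ω) (∑' t, γ ^ t * rmax)
      (fun m => Finset.measurable_sum _ fun t _ => (hR t).const_mul _) ?_ ?_
    · filter_upwards [hpt] with ω h m hm
      exact (h m hm).1
    · filter_upwards [hpt, hTu, hbd] with ω h ⟨m, hm⟩ hb
      rw [(h m hm).1, Real.norm_eq_abs, abs_of_nonneg (Finset.sum_nonneg fun t _ =>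
        mul_nonneg (pow_nonneg hγ0 t) (hb t).1)]
      refine (Finset.sum_le_sum fun t _ =>
        mul_le_mul_of_nonneg_left (hb t).2 (pow_nonneg hγ0 t)).trans ?_
      exact (hgeo.mul_right rmax).sum_le_tsum _ fun t _ => mul_nonneg (pow_nonneg hγ0 t) hrmax
  have iA : Integrable (fun ω => discPow γ (interTime X s 1 ω)) μ := by
    refine hint _ (fun m _ => γ ^ m) 1 (fun m => measurable_const) hdp ?_
    filter_upwards [hdp, hTu] with ω h ⟨m, hm⟩
    rw [h m hm, Real.norm_eq_abs, abs_of_nonneg (pow_nonneg hγ0 m)]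
    exact pow_le_one₀ hγ0 hγ1.le
  have sA := hsplit _ iA
  have sV := hsplit _ (iV.sub iG)
  have eA : ∀ m, ∫ ω in T m, discPow γ (interTime X s 1 ω) ∂μ = μ.real (T m) * γ ^ m := by
    intro m
    rw [setIntegral_congr_ae (g := fun _ => γ ^ m) (hTm m)]
    · simp
    · filter_upwards [hdp] with ω h hm
      exact h m hm
  have eV : ∀ m, ∫ ω in T m, ((fun ω => ∑' t, γ ^ t * R t ω) - fun ω => loopReward γ X R s 1 ω) ω ∂μ
      = μ.real (T m) * γ ^ m * ∫ ω, ∑' t : ℕ, γ ^ t * R t ω ∂μ := by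
    intro m
    rw [setIntegral_congr_ae (g := fun ω => γ ^ m * ∑' t, γ ^ t * R (m + t) ω) (hTm m)]
    · rw [integral_const_mul, int_tsum _ (fun t => R (m + t)) (fun t => hR _) γ rmax hγ0 hγ1,
        int_tsum _ R hR γ rmax hγ0 hγ1 hbd]
      · rw [mul_comm (μ.real (T m)), mul_assoc, ← tsum_mul_left (a := μ.real (T m))]
        congr 1
        apply tsum_congr
        intro t
        rw [shift_int μ X R hX hR P ν hν hL s hs1 hs0 m t (H m) (fun h hh => hh.1)]
        ring
      · filter_upwards [ae_restrict_of_ae hbd] with ω h t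
        exact h _
    · filter_upwards [hpt] with ω h hm
      simp only [Pi.sub_apply]
      rw [(h m hm).2]; ring
  simp_rw [eA] at sA
  simp_rw [eV] at sV
  have := (sA.mul_right (∫ ω, ∑' t : ℕ, γ ^ t * R t ω ∂μ)).unique sV
  rw [this]
  simp only [Pi.sub_apply]
  rw [integral_sub iV iG]
  ring

/-- deterministic error decomposition of the loop estimator: almost surely,
for every `n ≥ 1`,
`|v̂_n(s) - v(s)| ≤ (1-γ)⁻¹ (|β̂_n(s) - β(s)| + |α̂_n(s) - α(s)|·v(s))`. -/
theorem stmt1 {S : Type*} [Fintype S] [DecidableEq S] [MeasurableSpace S]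
    [MeasurableSingletonClass S]
    {Ω : Type*} [MeasurableSpace Ω] (μ : Measure Ω) [IsProbabilityMeasure μ]
    (X : ℕ → Ω → S) (R : ℕ → Ω → ℝ)
    (hX : ∀ t, Measurable (X t)) (hR : ∀ t, Measurable (R t))
    (P : S → S → ℝ≥0∞) (hrow : ∀ x, ∑ y, P x y = 1)
    (ν : S → Measure ℝ) (hν : ∀ x, IsProbabilityMeasure (ν x))
    (rmax : ℝ) (hrmax : 0 ≤ rmax) (hsupp : ∀ x, ν x (Set.Icc 0 rmax)ᶜ = 0)
    (hlaw : ∀ (t : ℕ) (h : Fin (t + 1) → S) (B : Fin (t + 1) → Set ℝ),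
      (∀ i, MeasurableSet (B i)) →
      μ {ω | ∀ i : Fin (t + 1), X i.val ω = h i ∧ R i.val ω ∈ B i}
        = μ {ω | X 0 ω = h 0} * (∏ i : Fin t, P (h i.castSucc) (h i.succ))
          * ∏ i : Fin (t + 1), ν (h i) (B i))
    (γ : ℝ) (hγ0 : 0 ≤ γ) (hγ1 : γ < 1)
    (s : S)
    (hstart : μ {ω | X 0 ω = s} = 1)
    (hrec : ∫⁻ ω, (retTime X s ω : ℝ≥0∞) ∂μ ≠ ⊤)
    -- the value `v(s)`, the expected loop discount `α(s)` and loop reward `β(s)`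
    (v α β : ℝ)
    (hv : v = ∫ ω, ∑' t : ℕ, γ ^ t * R t ω ∂μ)
    (hα : α = ∫ ω, discPow γ (interTime X s 1 ω) ∂μ)
    (hβ : β = ∫ ω, loopReward γ X R s 1 ω ∂μ) :
    ∀ᵐ ω ∂μ, ∀ n : ℕ, 1 ≤ n →
      |loopEst γ X R s n ω - v|
        ≤ (1 - γ)⁻¹ * (|loopBetaHat γ X R s n ω - β| + |loopAlphaHat γ X s n ω - α| * v) := by
  have hL := pathLaw_of μ X R P ν hlaw
  have hS0 : ∀ᵐ ω ∂μ, X 0 ω = s := (prob_compl_eq_zero_iff (hX 0 (measurableSet_singleton s))).2 hstart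
  have hs0 : ∀ x, x ≠ s → μ {ω | X 0 ω = x} = 0 := by
    intro x hx
    refine measure_mono_null (fun ω hω => ?_) hS0
    intro hc
    exact hx (hω.symm.trans hc)
  have hbd := ae_bdd μ X R hX hR P ν hν hL s rmax hsupp
  have hret := ae_ret μ X R hX hR P ν hν hL s hstart hs0 hrec
  have hv0 : 0 ≤ v := by
    rw [hv]
    apply integral_nonneg_of_ae
    filter_upwards [hbd] with ω h
    exact tsum_nonneg fun t => mul_nonneg (pow_nonneg hγ0 t) (h t).1
  have hfix : v = β + α * v := by
    rw [hα, hβ, hv]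
    exact renewal μ X R hX hR P ν hν rmax hrmax hL γ hγ0 hγ1 s hstart hs0 hS0 hbd hret
  filter_upwards [hS0, hret] with ω h0 hr n hn
  refine det_final γ v α β _ _ hγ1 ?_ hv0 hfix
  unfold loopAlphaHat
  rw [div_le_iff₀ (by exact_mod_cast hn)]
  calc _ ≤ ∑ i ∈ Finset.Icc 1 n, γ := by
        apply Finset.sum_le_sum
        intro i hi
        obtain ⟨k, hk, e⟩ := it_pos X s ω h0 hr i (Finset.mem_Icc.1 hi).1
        rw [e]
        exact (disc_le_s1 γ hγ0 hγ1 k hk).2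
    _ = γ * n := by simp [mul_comm]
end
end

section
/- Upper bound on waiting times: Let (X_t)_{t≥0} be a Markov chain on a finite state space, s a state with τ_s < ∞, n ≥ 1, and δ ∈ (0,1). Then with probability at least 1 − δ, the waiting time of the n-th visit to s satisfies W_n(s) < e · n · τ_s · log(e·n/δ). -/
open MeasureTheory ProbabilityTheory Filter
open scoped ENNReal ENat

noncomputable section

/-- `avoidProb P s t x`: the probability that a Markov chain with transition kernel `P`
started at `x` avoids state `s` during the next `t` steps. -/
def avoidProb {S : Type*} [Fintype S] [DecidableEq S] (P : S → S → ℝ≥0∞) (s : S) :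
    ℕ → S → ℝ≥0∞
  | 0, _ => 1
  | t + 1, x => ∑ y ∈ Finset.univ.erase s, P x y * avoidProb P s t y

/-- Expected first return time to `s` of a chain with kernel `P` started at `x`. -/
def expRet {S : Type*} [Fintype S] [DecidableEq S] (P : S → S → ℝ≥0∞) (s x : S) : ℝ≥0∞ :=
  ∑' t : ℕ, avoidProb P s t x

/-- Maximal expected hitting time `τ_s = max_{x} E_x[H_s^+]`. -/
def maxHit {S : Type*} [Fintype S] [DecidableEq S] (P : S → S → ℝ≥0∞) (s : S) : ℝ≥0∞ :=
  ⨆ x, expRet P s x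

def visitProb {S : Type*} [Fintype S] [DecidableEq S] (P : S → S → ℝ≥0∞) (s : S) :
    ℕ → ℕ → S → ℝ≥0∞
  | 0, j, _ => if j = 0 then 0 else 1
  | t + 1, j, x => ∑ y, P x y * visitProb P s t (if y = s then j - 1 else j) y

lemma avoidProb_add_le {S : Type*} [Fintype S] [DecidableEq S] (P : S → S → ℝ≥0∞) (s : S)
    (b : ℕ) (c : ℝ≥0∞) (h : ∀ x, avoidProb P s b x ≤ c) (a : ℕ) :
    ∀ x, avoidProb P s (a + b) x ≤ avoidProb P s a x * c := by
  induction a with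
  | zero => intro x; simpa [avoidProb] using h x
  | succ a ih =>
    intro x
    rw [show a + 1 + b = (a + b) + 1 by ring]
    simp only [avoidProb, Finset.sum_mul]
    refine Finset.sum_le_sum fun y _ => ?_
    rw [mul_assoc]
    gcongr
    exact ih y

lemma avoidProb_mul_le {S : Type*} [Fintype S] [DecidableEq S] (P : S → S → ℝ≥0∞) (s : S)
    (b : ℕ) (c : ℝ≥0∞) (h : ∀ x, avoidProb P s b x ≤ c) (m : ℕ) :
    ∀ x, avoidProb P s (m * b) x ≤ c ^ m := by
  induction m with
  | zero => intro x; simp [avoidProb]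
  | succ m ih =>
    intro x
    rw [add_mul, one_mul, pow_succ]
    refine (avoidProb_add_le P s b c h _ x).trans ?_
    gcongr
    exact ih x

lemma avoidProb_antitone {S : Type*} [Fintype S] [DecidableEq S] (P : S → S → ℝ≥0∞)
    (hrow : ∀ x, ∑ y, P x y = 1) (s x : S) : Antitone (fun t => avoidProb P s t x) := by
  refine antitone_nat_of_succ_le fun t => ?_
  have := avoidProb_add_le P s 1 1 (fun x => ?_) t x
  · simpa using this
  · simp only [avoidProb, mul_one]
    rw [← hrow x]
    exact Finset.sum_le_sum_of_subset (Finset.subset_univ _)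

lemma mul_avoidProb_le {S : Type*} [Fintype S] [DecidableEq S] (P : S → S → ℝ≥0∞)
    (hrow : ∀ x, ∑ y, P x y = 1) (s x : S) (k : ℕ) :
    ((k + 1 : ℕ) : ℝ≥0∞) * avoidProb P s k x ≤ maxHit P s := by
  calc ((k + 1 : ℕ) : ℝ≥0∞) * avoidProb P s k x
      = ∑ t ∈ Finset.range (k + 1), avoidProb P s k x := by simp
    _ ≤ ∑ t ∈ Finset.range (k + 1), avoidProb P s t x :=
        Finset.sum_le_sum fun t ht =>
          avoidProb_antitone P hrow s x (by have := Finset.mem_range.1 ht; omega)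
    _ ≤ expRet P s x := ENNReal.sum_le_tsum _
    _ ≤ maxHit P s := le_iSup (fun x => expRet P s x) x

lemma one_le_maxHit {S : Type*} [Fintype S] [DecidableEq S] (P : S → S → ℝ≥0∞)
    (hrow : ∀ x, ∑ y, P x y = 1) (s : S) : 1 ≤ maxHit P s := by
  simpa [avoidProb] using mul_avoidProb_le P hrow s s 0

lemma visitProb_zero {S : Type*} [Fintype S] [DecidableEq S] (P : S → S → ℝ≥0∞) (s : S)
    (t : ℕ) : ∀ x, visitProb P s t 0 x = 0 := by
  induction t with
  | zero => intro x; simp [visitProb]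
  | succ t ih => intro x; simp [visitProb, ih]

lemma visitProb_le_one {S : Type*} [Fintype S] [DecidableEq S] (P : S → S → ℝ≥0∞)
    (hrow : ∀ x, ∑ y, P x y = 1) (s : S) (t : ℕ) : ∀ j x, visitProb P s t j x ≤ 1 := by
  induction t with
  | zero => intro j x; simp only [visitProb]; split_ifs <;> simp
  | succ t ih =>
    intro j x
    rw [visitProb, ← hrow x]
    refine Finset.sum_le_sum fun y _ => ?_
    exact mul_le_of_le_one_right' (ih _ _)

lemma visitProb_succ_le {S : Type*} [Fintype S] [DecidableEq S] (P : S → S → ℝ≥0∞)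
    (hrow : ∀ x, ∑ y, P x y = 1) (s : S) (j T : ℕ) (C : ℝ≥0∞)
    (hC : ∀ t, T ≤ t → ∀ y, visitProb P s t j y ≤ C) (r : ℕ) :
    ∀ t, T ≤ t → ∀ x, visitProb P s (t + r) (j + 1) x ≤ avoidProb P s r x + C := by
  induction r with
  | zero =>
    intro t _ x
    exact (visitProb_le_one P hrow s _ _ x).trans (by simp [avoidProb])
  | succ r ih =>
    intro t ht x
    rw [← add_assoc, visitProb, avoidProb]
    have h1 : C = ∑ y, P x y * C := by rw [← Finset.sum_mul, hrow, one_mul]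
    rw [← Finset.sum_erase_add _ _ (Finset.mem_univ s)]
    rw [h1, ← Finset.sum_erase_add _ _ (Finset.mem_univ s), ← add_assoc,
      ← Finset.sum_add_distrib]
    refine add_le_add (Finset.sum_le_sum fun y hy => ?_) ?_
    · rw [if_neg (Finset.ne_of_mem_erase hy), ← mul_add]
      gcongr
      exact ih t ht y
    · simp only [if_true, Nat.add_sub_cancel]
      gcongr
      exact hC _ (by omega) s

lemma visitProb_le {S : Type*} [Fintype S] [DecidableEq S] (P : S → S → ℝ≥0∞)
    (hrow : ∀ x, ∑ y, P x y = 1) (s : S) (K : ℕ) (ε : ℝ≥0∞)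
    (hε : ∀ x, avoidProb P s K x ≤ ε) (j : ℕ) :
    ∀ t, j * K ≤ t → ∀ x, visitProb P s t j x ≤ j * ε := by
  induction j with
  | zero => intro t _ x; simp [visitProb_zero]
  | succ j ih =>
    intro t ht x
    rw [add_mul, one_mul] at ht
    obtain ⟨t', rfl⟩ : ∃ t', t = t' + K := ⟨t - K, by omega⟩
    refine (visitProb_succ_le P hrow s j (j * K) _ ih K t' (by omega) x).trans ?_
    push_cast
    rw [add_mul, one_mul, add_comm]
    gcongr
    exact hε x

lemma cyl_le {S : Type*} [Fintype S] [DecidableEq S]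
    {Ω : Type*} [MeasurableSpace Ω] (μ : Measure Ω)
    (X : ℕ → Ω → S) (P : S → S → ℝ≥0∞)
    (hmarkov : ∀ (t : ℕ) (h : Fin (t + 1) → S) (s' : S),
      μ {ω | X (t + 1) ω = s' ∧ ∀ i : Fin (t + 1), X i.val ω = h i}
        = P (h (Fin.last t)) s' * μ {ω | ∀ i : Fin (t + 1), X i.val ω = h i})
    (s : S) (t : ℕ) : ∀ (u j : ℕ) (h : Fin (u + 1) → S),
      μ {ω | (∀ i : Fin (u + 1), X i.val ω = h i) ∧
          ∑ i ∈ Finset.range t, (if X (u + 1 + i) ω = s then 1 else 0) < j}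
        ≤ visitProb P s t j (h (Fin.last u)) * μ {ω | ∀ i : Fin (u + 1), X i.val ω = h i} := by
  induction t with
  | zero =>
    intro u j h
    rcases Nat.eq_zero_or_pos j with rfl | hj
    · simp
    · simp [visitProb, hj, hj.ne']
  | succ t ih =>
    intro u j h
    have key : ∀ y, μ {ω | (∀ i : Fin (u + 1 + 1), X i.val ω =
          (Fin.snoc (α := fun _ => S) h y : Fin (u + 1 + 1) → S) i) ∧
          ∑ i ∈ Finset.range t, (if X (u + 1 + 1 + i) ω = s then 1 else 0)
            < (if y = s then j - 1 else j)} ≤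
        P (h (Fin.last u)) y * visitProb P s t (if y = s then j - 1 else j) y *
          μ {ω | ∀ i : Fin (u + 1), X i.val ω = h i} := by
      intro y
      refine (ih (u + 1) _ _).trans (le_of_eq ?_)
      rw [Fin.snoc_last, mul_comm (P _ _), mul_assoc, ← hmarkov u h y]
      congr 2
      ext ω
      simp only [Set.mem_ofPred_eq]
      rw [Fin.forall_fin_succ', and_comm]
      simp only [Fin.snoc_castSucc, Fin.snoc_last, Fin.val_castSucc, Fin.val_last]
    rw [visitProb, Finset.sum_mul]
    refine le_trans (le_trans (measure_mono ?_) (measure_iUnion_fintype_le μ _))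
      (Finset.sum_le_sum fun y _ => key y)
    intro ω hω
    obtain ⟨h1, h2⟩ := hω
    refine Set.mem_iUnion.2 ⟨X (u + 1) ω, ?_, ?_⟩
    · intro i
      refine Fin.lastCases ?_ (fun i => ?_) i
      · simp
      · simpa using h1 i
    · rw [Finset.sum_range_succ'] at h2
      have e : ∑ i ∈ Finset.range t, (if X (u + 1 + (i + 1)) ω = s then 1 else 0)
          = ∑ i ∈ Finset.range t, (if X (u + 1 + 1 + i) ω = s then 1 else 0) :=
        Finset.sum_congr rfl fun i _ => by
          rw [show u + 1 + (i + 1) = u + 1 + 1 + i by ring]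
      rw [e, add_zero] at h2
      split_ifs with hs
      · rw [if_pos hs] at h2; omega
      · rw [if_neg hs] at h2; omega

lemma bad_le {S : Type*} [Fintype S] [DecidableEq S] [MeasurableSpace S]
    [MeasurableSingletonClass S]
    {Ω : Type*} [MeasurableSpace Ω] (μ : Measure Ω) [IsProbabilityMeasure μ]
    (X : ℕ → Ω → S) (hX : ∀ t, Measurable (X t)) (P : S → S → ℝ≥0∞)
    (hmarkov : ∀ (t : ℕ) (h : Fin (t + 1) → S) (s' : S),
      μ {ω | X (t + 1) ω = s' ∧ ∀ i : Fin (t + 1), X i.val ω = h i}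
        = P (h (Fin.last t)) s' * μ {ω | ∀ i : Fin (t + 1), X i.val ω = h i})
    (s : S) (t n : ℕ) (C : ℝ≥0∞) (hC : ∀ x, visitProb P s t n x ≤ C) :
    μ {ω | ∑ i ∈ Finset.range (t + 1), (if X i ω = s then 1 else 0) < n} ≤ C := by
  have hsum : ∑ x, μ (X 0 ⁻¹' {x}) = 1 := by
    rw [sum_measure_preimage_singleton _ (fun y _ => hX 0 (measurableSet_singleton y))]
    simp
  calc _ ≤ μ (⋃ x : S, {ω | (∀ i : Fin (0 + 1), X i.val ω = (fun _ => x) i) ∧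
          ∑ i ∈ Finset.range t, (if X (0 + 1 + i) ω = s then 1 else 0) < n}) := by
        refine measure_mono fun ω hω => Set.mem_iUnion.2 ⟨X 0 ω, ?_, ?_⟩
        · intro i; simp
        · have h2 : _ < n := hω
          rw [Finset.sum_range_succ'] at h2
          simp only [zero_add, add_comm 1]
          omega
    _ ≤ ∑ x, μ _ := measure_iUnion_fintype_le μ _
    _ ≤ ∑ x, C * μ (X 0 ⁻¹' {x}) := by
        refine Finset.sum_le_sum fun x _ => (cyl_le μ X P hmarkov s t 0 n (fun _ => x)).trans ?_
        refine mul_le_mul' (hC x) (measure_mono fun ω hω => ?_)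
        simpa using hω 0
    _ = C := by rw [← Finset.mul_sum, hsum, mul_one]

/-- with probability at least `1 - δ`,
`W_n(s) < e · n · τ_s · log (e·n/δ)`. -/
theorem stmt5 {S : Type*} [Fintype S] [DecidableEq S] [MeasurableSpace S]
    [MeasurableSingletonClass S]
    {Ω : Type*} [MeasurableSpace Ω] (μ : Measure Ω) [IsProbabilityMeasure μ]
    (X : ℕ → Ω → S) (hX : ∀ t, Measurable (X t))
    (P : S → S → ℝ≥0∞) (hrow : ∀ x, ∑ y, P x y = 1)
    (hmarkov : ∀ (t : ℕ) (h : Fin (t + 1) → S) (s' : S),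
      μ {ω | X (t + 1) ω = s' ∧ ∀ i : Fin (t + 1), X i.val ω = h i}
        = P (h (Fin.last t)) s' * μ {ω | ∀ i : Fin (t + 1), X i.val ω = h i})
    (s : S) (hτ : maxHit P s ≠ ⊤)
    (n : ℕ) (hn : 1 ≤ n) (δ : ℝ) (hδ0 : 0 < δ) (hδ1 : δ < 1) :
    μ {ω | (waitTime X s n ω : ℝ≥0∞)
        < ENNReal.ofReal
            (Real.exp 1 * n * (maxHit P s).toReal * Real.log (Real.exp 1 * n / δ))}
      ≥ ENNReal.ofReal (1 - δ) := by
  set τ := (maxHit P s).toReal with hτdef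
  have hτ1 : 1 ≤ τ := by
    have := (ENNReal.toReal_le_toReal ENNReal.one_ne_top hτ).2 (one_le_maxHit P hrow s)
    simpa using this
  have hn' : (1 : ℝ) ≤ n := by exact_mod_cast hn
  have he : 1 < Real.exp 1 := by simp
  have heτ : 1 < Real.exp 1 * τ := by nlinarith
  set L := Real.log (n / δ) with hL
  have hL0 : 0 < L := Real.log_pos (by rw [lt_div_iff₀ hδ0]; linarith)
  have hlog : Real.log (Real.exp 1 * n / δ) = 1 + L := by
    rw [mul_div_assoc, Real.log_mul (by positivity) (by positivity), Real.log_exp]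
  obtain ⟨k, hk⟩ : ∃ k, ⌈Real.exp 1 * τ⌉₊ = k + 1 :=
    Nat.exists_eq_succ_of_ne_zero (by have := Nat.ceil_pos.2 (zero_lt_one.trans heτ); omega)
  have hk1 : Real.exp 1 * τ ≤ k + 1 := by
    have := Nat.le_ceil (Real.exp 1 * τ); rw [hk] at this; exact_mod_cast this
  have hk2 : (k : ℝ) < Real.exp 1 * τ := by
    have := Nat.ceil_lt_add_one (zero_lt_one.trans heτ).le
    rw [hk] at this; push_cast at this; linarith
  set m := ⌈L⌉₊ with hm
  have hm1 : L ≤ m := Nat.le_ceil L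
  have hm2 : (m : ℝ) < L + 1 := Nat.ceil_lt_add_one hL0.le
  have hav : ∀ x, avoidProb P s k x ≤ ENNReal.ofReal (Real.exp (-1)) := by
    intro x
    have h1 := mul_avoidProb_le P hrow s x k
    have h2 : maxHit P s ≤ ((k + 1 : ℕ) : ℝ≥0∞) * ENNReal.ofReal (Real.exp (-1)) := by
      rw [← ENNReal.ofReal_toReal hτ, ← ENNReal.ofReal_natCast,
        ← ENNReal.ofReal_mul (by positivity)]
      apply ENNReal.ofReal_le_ofReal
      rw [Real.exp_neg, ← div_eq_mul_inv, le_div_iff₀ (by positivity)]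
      push_cast; linarith
    exact (ENNReal.mul_le_mul_iff_right (by simp) (by simp)).1 (h1.trans h2)
  have hK := avoidProb_mul_le P s k _ hav m
  have hv := visitProb_le P hrow s (m * k) _ hK n (n * (m * k)) le_rfl
  have hbad := bad_le μ X hX P hmarkov s _ n _ hv
  have hδ : (n : ℝ≥0∞) * ENNReal.ofReal (Real.exp (-1)) ^ m ≤ ENNReal.ofReal δ := by
    rw [← ENNReal.ofReal_pow (by positivity), ← ENNReal.ofReal_natCast,
        ← ENNReal.ofReal_mul (by positivity)]
    apply ENNReal.ofReal_le_ofReal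
    rw [← Real.exp_nat_mul]
    have : Real.exp (m * -1) ≤ δ / n := by
      rw [← Real.le_log_iff_exp_le (by positivity), ← inv_div, Real.log_inv]
      linarith
    calc _ ≤ n * (δ / n) := by gcongr
      _ = δ := by field_simp
  have hbad' := hbad.trans hδ
  rw [ge_iff_le, ENNReal.ofReal_sub _ hδ0.le, ENNReal.ofReal_one, tsub_le_iff_right]
  refine le_trans ?_ (add_le_add_right hbad' _)
  refine le_trans ?_ (measure_union_le _ _)
  rw [← measure_univ (μ := μ)]
  refine measure_mono fun ω _ => ?_
  by_cases hω : ∑ i ∈ Finset.range (n * (m * k) + 1), (if X i ω = s then 1 else 0) < n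
  · exact Or.inr hω
  · left
    have hw : waitTime X s n ω ≤ ((n * (m * k) : ℕ) : ℕ∞) := by
      unfold waitTime
      refine iInf₂_le_of_le (n * (m * k)) ?_ le_rfl
      exact not_lt.1 hω
    have hw' : (waitTime X s n ω : ℝ≥0∞) ≤ ((n * (m * k) : ℕ) : ℝ≥0∞) := by
      have := ENat.toENNReal_le.2 hw
      rwa [ENat.toENNReal_coe] at this
    refine lt_of_le_of_lt hw' ?_
    rw [← ENNReal.ofReal_natCast]
    rw [hlog]
    have hlt : (m : ℝ) * k < (1 + L) * (Real.exp 1 * τ) :=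
      mul_lt_mul'' (by linarith) hk2 (by positivity) (by positivity)
    refine (ENNReal.ofReal_lt_ofReal_iff (by positivity)).2 ?_
    push_cast
    calc (n : ℝ) * (m * k) < n * ((1 + L) * (Real.exp 1 * τ)) := by gcongr
      _ = _ := by ring
end
end

section
/- Impossibility of consistent value estimation at a transient state: Fix γ ∈ (0,1). Consider the three Markov reward processes on states {s_1, s_2, s_3} with deterministic rewards equal to 1 at s_2 and 0 at s_1 and s_3, where: in M', s_1 transitions to s_2 with probability 1 and s_2 is absorbing; in M'', s_1 transitions to s_3 with probability 1 and s_3 is absorbing; and in M, s_1 transitions to s_2 and to s_3 each with probability 1/2, and s_2, s_3 are absorbing. Their γ-discounted values at the start state are v_{M'}(s_1) = γ/(1−γ), v_{M''}(s_1) = 0, and v_M(s_1) = γ/(2(1−γ)). Then there is no sequence of measurable functions (f_T)_{T≥1}, where f_T maps length-T state-reward trajectory prefixes to ℝ, such that f_T applied to the sample path prefix converges in probability to the value of the start state simultaneously under all three MRPs started at s_1. -/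
open MeasureTheory ProbabilityTheory Filter
open scoped ENNReal ENat

noncomputable section

/-- Deterministic rewards: reward `1` at state `s₂` (index `1`) and `0` elsewhere. -/
def rewardDist : Fin 3 → Measure ℝ :=
  fun x => Measure.dirac (if x = (1 : Fin 3) then (1 : ℝ) else 0)

/-- `(μ, X, R)` is a Markov reward process on states `{s₁, s₂, s₃} = {0, 1, 2}` with
transition kernel `P`, deterministic rewards `1` at `s₂` and `0` elsewhere, started
at `s₁ = 0`. -/
def IsMRPFrom {Ω : Type*} [MeasurableSpace Ω] (μ : Measure Ω) (X : ℕ → Ω → Fin 3)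
    (R : ℕ → Ω → ℝ) (P : Fin 3 → Fin 3 → ℝ≥0∞) : Prop :=
  (∀ t, Measurable (X t)) ∧ (∀ t, Measurable (R t)) ∧
  (∀ (t : ℕ) (h : Fin (t + 1) → Fin 3) (B : Fin (t + 1) → Set ℝ),
    (∀ i, MeasurableSet (B i)) →
    μ {ω | ∀ i : Fin (t + 1), X i.val ω = h i ∧ R i.val ω ∈ B i}
      = μ {ω | X 0 ω = h 0} * (∏ i : Fin t, P (h i.castSucc) (h i.succ))
        * ∏ i : Fin (t + 1), rewardDist (h i) (B i))
  ∧ μ {ω | X 0 ω = 0} = 1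

/-- In `M'`, `s₁ → s₂` with probability 1, and `s₂`, `s₃` are absorbing. -/
def kerM' : Fin 3 → Fin 3 → ℝ≥0∞ := ![![0, 1, 0], ![0, 1, 0], ![0, 0, 1]]

/-- In `M''`, `s₁ → s₃` with probability 1, and `s₂`, `s₃` are absorbing. -/
def kerM'' : Fin 3 → Fin 3 → ℝ≥0∞ := ![![0, 0, 1], ![0, 1, 0], ![0, 0, 1]]

/-- In `M`, `s₁` goes to `s₂` or `s₃` each with probability 1/2; `s₂`, `s₃` absorbing. -/
def kerM : Fin 3 → Fin 3 → ℝ≥0∞ := ![![0, 1 / 2, 1 / 2], ![0, 1, 0], ![0, 0, 1]]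

/-- The estimator sequence `f` converges in probability to `c` under the process
`(X, R)` on `(Ω, μ)`, where `f T` is applied to the length-`T` trajectory prefix. -/
def ConsistentAt {Ω : Type*} [MeasurableSpace Ω] (μ : Measure Ω) (X : ℕ → Ω → Fin 3)
    (R : ℕ → Ω → ℝ) (f : (T : ℕ) → (Fin T → Fin 3 × ℝ) → ℝ) (c : ℝ) : Prop :=
  ∀ ε : ℝ, 0 < ε →
    Tendsto (fun T : ℕ => μ {ω | ε ≤ |f T (fun i => (X i.val ω, R i.val ω)) - c|})
      atTop (nhds 0)


/-- the deterministic path that jumps from `0` to `a` at time 1 and stays there -/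
def detPath (a : Fin 3) (t : ℕ) : Fin 3 := if t = 0 then 0 else a

/-- rewards along `detPath` -/
def detRew (a : Fin 3) (t : ℕ) : ℝ := if detPath a t = 1 then 1 else 0

/-- the event that the trajectory follows `detPath a` forever -/
def detEvent {Ω : Type*} (X : ℕ → Ω → Fin 3) (R : ℕ → Ω → ℝ) (a : Fin 3) : Set Ω :=
  {ω | ∀ t, X t ω = detPath a t ∧ R t ω = detRew a t}

lemma detEvent_measurable {Ω : Type*} [MeasurableSpace Ω] {X : ℕ → Ω → Fin 3}
    {R : ℕ → Ω → ℝ} (hX : ∀ t, Measurable (X t)) (hR : ∀ t, Measurable (R t)) (a : Fin 3) :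
    MeasurableSet (detEvent X R a) := by
  have : detEvent X R a = ⋂ t, (X t ⁻¹' {detPath a t} ∩ R t ⁻¹' {detRew a t}) := by
    ext ω; simp [detEvent]
  rw [this]
  exact MeasurableSet.iInter fun t =>
    (hX t (measurableSet_singleton _)).inter (hR t (measurableSet_singleton _))

lemma detEvent_measure {Ω : Type*} [MeasurableSpace Ω] {μ : Measure Ω} [IsProbabilityMeasure μ]
    {X : ℕ → Ω → Fin 3} {R : ℕ → Ω → ℝ} {P : Fin 3 → Fin 3 → ℝ≥0∞}
    (h : IsMRPFrom μ X R P) (a : Fin 3) (ha : P a a = 1) :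
    μ (detEvent X R a) = P 0 a := by
  obtain ⟨hX, hR, hF, h0⟩ := h
  let S : ℕ → Set Ω := fun T =>
    {ω | ∀ i : Fin (T + 1 + 1), X i.val ω = detPath a i.val ∧ R i.val ω ∈ ({detRew a i.val} : Set ℝ)}
  have hS : ∀ T, μ (S T) = P 0 a := by
    intro T
    have := hF (T + 1) (fun i => detPath a i.val) (fun i => {detRew a i.val})
      (fun i => measurableSet_singleton _)
    rw [show S T = _ from rfl, this]
    have e1 : ∏ i : Fin (T + 1 + 1), rewardDist (detPath a i.val) {detRew a i.val} = 1 := by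
      apply Finset.prod_eq_one
      intro i _
      simp [rewardDist, detRew]
    rw [e1, Fin.prod_univ_succ]
    simp [detPath, h0, ha]
  have hE : detEvent X R a = ⋂ T, S T := by
    ext ω
    simp only [detEvent, S, Set.mem_setOf_eq, Set.mem_iInter, Set.mem_singleton_iff]
    constructor
    · intro h T i
      exact h i
    · intro h t
      exact h t ⟨t, by omega⟩
  have hSm : ∀ T, MeasurableSet (S T) := by
    intro T
    have : S T = ⋂ i : Fin (T + 1 + 1),
        (X i.val ⁻¹' {detPath a i.val} ∩ R i.val ⁻¹' {detRew a i.val}) := by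
      ext ω; simp [S]
    rw [this]
    exact MeasurableSet.iInter fun t =>
      (hX t (measurableSet_singleton _)).inter (hR t (measurableSet_singleton _))
  have hanti : Antitone S := by
    intro m n hmn ω hω i
    exact hω ⟨i.val, by omega⟩
  have ht := tendsto_measure_iInter_atTop (μ := μ) (fun T => (hSm T).nullMeasurableSet) hanti
    ⟨0, measure_ne_top _ _⟩
  rw [← hE] at ht
  simp only [Function.comp_def, hS] at ht
  exact (tendsto_nhds_unique ht tendsto_const_nhds)

lemma det_sum_one {γ : ℝ} (hγ0 : 0 < γ) (hγ1 : γ < 1) :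
    ∑' t : ℕ, γ ^ t * detRew 1 t = γ / (1 - γ) := by
  have h1 : HasSum (fun t : ℕ => γ ^ (t + 1) * detRew 1 (t + 1)) (γ / (1 - γ)) := by
    have := (hasSum_geometric_of_lt_one hγ0.le hγ1).mul_left γ
    simpa [detRew, detPath, pow_succ', div_eq_mul_inv] using this
  have h2 := (hasSum_nat_add_iff (f := fun t : ℕ => γ ^ t * detRew 1 t) 1).1 h1
  rw [h2.tsum_eq]
  simp [detRew, detPath]

lemma det_sum_two {γ : ℝ} : ∑' t : ℕ, γ ^ t * detRew 2 t = 0 := by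
  have : ∀ t, detRew 2 t = 0 := by
    intro t
    by_cases ht : t = 0 <;> simp [detRew, detPath, ht]
  simp [this]

lemma det_consistent {Ω : Type*} [MeasurableSpace Ω] {μ : Measure Ω}
    {X : ℕ → Ω → Fin 3} {R : ℕ → Ω → ℝ} {f : (T : ℕ) → (Fin T → Fin 3 × ℝ) → ℝ} {c : ℝ}
    (a : Fin 3) (hp : 0 < μ (detEvent X R a)) (h : ConsistentAt μ X R f c) :
    Tendsto (fun T => f T (fun i => (detPath a i.val, detRew a i.val))) atTop (nhds c) := by
  rw [Metric.tendsto_nhds]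
  intro ε hε
  filter_upwards [(h ε hε).eventually (gt_mem_nhds hp)] with T hT
  rw [Real.dist_eq]
  by_contra hcon
  push Not at hcon
  refine absurd hT (not_lt.2 (measure_mono ?_))
  intro ω hω
  have : (fun i : Fin T => (X i.val ω, R i.val ω))
      = fun i : Fin T => (detPath a i.val, detRew a i.val) := by
    funext i
    rw [(hω i.val).1, (hω i.val).2]
  simpa only [Set.mem_setOf_eq, this] using hcon

lemma det_sum_of_mem {Ω : Type*} {X : ℕ → Ω → Fin 3} {R : ℕ → Ω → ℝ} {a : Fin 3} {ω : Ω}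
    (hω : ω ∈ detEvent X R a) (γ : ℝ) :
    ∑' t : ℕ, γ ^ t * R t ω = ∑' t : ℕ, γ ^ t * detRew a t :=
  tsum_congr fun t => by rw [(hω t).2]

/-- the values at the start state of `M'`, `M''`, `M` are `γ/(1-γ)`, `0`,
`γ/(2(1-γ))` respectively, and no sequence of measurable estimators of trajectory
prefixes is simultaneously consistent for the start-state value under all three MRPs. -/
theorem stmt18 (γ : ℝ) (hγ0 : 0 < γ) (hγ1 : γ < 1)
    {Ω₁ : Type*} [MeasurableSpace Ω₁] (μ₁ : Measure Ω₁) [IsProbabilityMeasure μ₁]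
    (X₁ : ℕ → Ω₁ → Fin 3) (R₁ : ℕ → Ω₁ → ℝ) (h₁ : IsMRPFrom μ₁ X₁ R₁ kerM')
    {Ω₂ : Type*} [MeasurableSpace Ω₂] (μ₂ : Measure Ω₂) [IsProbabilityMeasure μ₂]
    (X₂ : ℕ → Ω₂ → Fin 3) (R₂ : ℕ → Ω₂ → ℝ) (h₂ : IsMRPFrom μ₂ X₂ R₂ kerM'')
    {Ω₃ : Type*} [MeasurableSpace Ω₃] (μ₃ : Measure Ω₃) [IsProbabilityMeasure μ₃]
    (X₃ : ℕ → Ω₃ → Fin 3) (R₃ : ℕ → Ω₃ → ℝ) (h₃ : IsMRPFrom μ₃ X₃ R₃ kerM) :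
    (∫ ω, ∑' t : ℕ, γ ^ t * R₁ t ω ∂μ₁ = γ / (1 - γ))
    ∧ (∫ ω, ∑' t : ℕ, γ ^ t * R₂ t ω ∂μ₂ = 0)
    ∧ (∫ ω, ∑' t : ℕ, γ ^ t * R₃ t ω ∂μ₃ = γ / (2 * (1 - γ)))
    ∧ ¬ ∃ f : (T : ℕ) → (Fin T → Fin 3 × ℝ) → ℝ,
        (∀ T, Measurable (f T))
        ∧ ConsistentAt μ₁ X₁ R₁ f (γ / (1 - γ))
        ∧ ConsistentAt μ₂ X₂ R₂ f 0
        ∧ ConsistentAt μ₃ X₃ R₃ f (γ / (2 * (1 - γ))) := by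
  have m1 : μ₁ (detEvent X₁ R₁ 1) = 1 := by
    rw [detEvent_measure h₁ 1 (by simp [kerM'])]; simp [kerM']
  have m2 : μ₂ (detEvent X₂ R₂ 2) = 1 := by
    rw [detEvent_measure h₂ 2 (by simp [kerM''])]; simp [kerM'']
  have m31 : μ₃ (detEvent X₃ R₃ 1) = 1 / 2 := by
    rw [detEvent_measure h₃ 1 (by simp [kerM])]; simp [kerM]
  have m32 : μ₃ (detEvent X₃ R₃ 2) = 1 / 2 := by
    rw [detEvent_measure h₃ 2 (by simp [kerM])]; simp [kerM]
  have me1 := detEvent_measurable h₁.1 h₁.2.1 1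
  have me2 := detEvent_measurable h₂.1 h₂.2.1 2
  have me31 := detEvent_measurable h₃.1 h₃.2.1 1
  have me32 := detEvent_measurable h₃.1 h₃.2.1 2
  have hg : (1 - γ) ≠ 0 := by linarith
  refine ⟨?_, ?_, ?_, ?_⟩
  · have hae : ∀ᵐ ω ∂μ₁, ∑' t : ℕ, γ ^ t * R₁ t ω = γ / (1 - γ) := by
      filter_upwards [(mem_ae_iff_prob_eq_one me1).2 m1] with ω hω
      rw [det_sum_of_mem hω, det_sum_one hγ0 hγ1]
    rw [integral_congr_ae hae]; simp
  · have hae : ∀ᵐ ω ∂μ₂, ∑' t : ℕ, γ ^ t * R₂ t ω = 0 := by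
      filter_upwards [(mem_ae_iff_prob_eq_one me2).2 m2] with ω hω
      rw [det_sum_of_mem hω, det_sum_two]
    rw [integral_congr_ae hae]; simp
  · have hdisj : Disjoint (detEvent X₃ R₃ 1) (detEvent X₃ R₃ 2) := by
      rw [Set.disjoint_left]
      intro ω h1 h2
      have := (h1 1).1.symm.trans (h2 1).1
      simp [detPath] at this
    have mu : μ₃ (detEvent X₃ R₃ 1 ∪ detEvent X₃ R₃ 2) = 1 := by
      rw [measure_union hdisj me32, m31, m32, ENNReal.add_halves]
    have hae : (fun ω => ∑' t : ℕ, γ ^ t * R₃ t ω) =ᵐ[μ₃]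
        (detEvent X₃ R₃ 1).indicator (fun _ => γ / (1 - γ)) := by
      filter_upwards [(mem_ae_iff_prob_eq_one (me31.union me32)).2 mu] with ω hω
      rcases hω with hω | hω
      · rw [det_sum_of_mem hω, det_sum_one hγ0 hγ1, Set.indicator_of_mem hω]
      · rw [det_sum_of_mem hω, det_sum_two,
          Set.indicator_of_notMem (fun h => Set.disjoint_left.1 hdisj h hω)]
    rw [integral_congr_ae hae, integral_indicator_const _ me31, Measure.real, m31]
    simp
    field_simp
  · rintro ⟨f, -, c1, -, c3⟩
    have t1 := det_consistent 1 (by rw [m1]; exact one_pos) c1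
    have t3 := det_consistent 1 (by rw [m31]; simp) c3
    have heq := tendsto_nhds_unique t1 t3
    field_simp at heq
    norm_num at heq
end
end
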